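/- arXiv:1305.3711 — 5 statements merged into one kernel-verified Lean document; each statement's English description precedes it below -/
import Mathlib

section
/- For every n ∈ ℕ, the Fisher information of the Rakhmanov density of the orthonormal Hermite polynomial equals F[ρ_n] = 4n + 2; equivalently, the Fisher length is (δx)_n = 1/√(4n+2). -/
open MeasureTheory Real

/-- The physicists' Hermite polynomial `H_n`. -/
noncomputable def hermiteH : ℕ → ℝ → ℝ
  | 0, _ => 1
  | 1, x => 2 * x
  | (n + 2), x => 2 * x * hermiteH (n + 1) x - 2 * ((n : ℝ) + 1) * hermiteH n x

/-- The Rakhmanov density of the orthonormal Hermite polynomial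
`p_n(x) = (2^n n! √π)^{-1/2} H_n(x)`, i.e. `ρ_n(x) = p_n(x)^2 e^{-x²}`. -/
noncomputable def hermiteρ (n : ℕ) (x : ℝ) : ℝ :=
  (hermiteH n x) ^ 2 * Real.exp (-x ^ 2) / (2 ^ n * (n.factorial : ℝ) * Real.sqrt π)

/-!
With `D p = p'` and `A p = 2 X p - p'`, one has `D A = A D + 2`, and `A` is the adjoint of `D` for
the weight `e^{-x²}`. For `ρ = p² e^{-x²}` one has `ρ'² / ρ = (A p - D p)² e^{-x²}`, so adjointness
gives `F[ρ] = 2 ‖D p‖² + 2 ‖p‖² - 2 ⟨p, D² p⟩`. If `A D p = μ p`, then `‖D p‖² = μ ‖p‖²`, while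
`D² p` is an eigenvector of the self-adjoint operator `A D` for the eigenvalue `μ - 4`, hence
orthogonal to `p`. Since `A D H_n = 2 n H_n`, the Fisher information is `2 (2 n) + 2` times
`‖H_n‖²`, and the normalization cancels `‖H_n‖²`.
-/

section FisherInformation

/-- The Fisher information `F[ρ] = ∫ ρ'² / ρ` of a function on the line. Points where `ρ` vanishes
do not contribute, since division by zero gives `0`. -/
noncomputable def fisherInformation (ρ : ℝ → ℝ) : ℝ :=
  ∫ x, deriv ρ x ^ 2 / ρ x

lemma fisherInformation_const_mul (c : ℝ) (ρ : ℝ → ℝ) :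
    fisherInformation (fun x ↦ c * ρ x) = c * fisherInformation ρ := by
  simp only [fisherInformation, ← integral_const_mul, deriv_const_mul_field]
  congr 1 with x
  rw [mul_pow, mul_div_mul_comm, sq c, mul_self_div_self]

lemma countable_setOf_eq_and_deriv_ne_zero {𝕜 F : Type*} [NontriviallyNormedField 𝕜]
    [SecondCountableTopology 𝕜] [NormedAddCommGroup F] [NormedSpace 𝕜 F] (f : 𝕜 → F) (c : F) :
    {x | f x = c ∧ deriv f x ≠ 0}.Countable := by
  refine (HereditarilyLindelofSpace.isLindelof _).countable_of_isDiscrete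
    (isDiscrete_iff_nhdsNE.2 fun x hx ↦ Filter.inf_principal_eq_bot.2 ?_)
  have hf : HasDerivAt f (deriv f x) x := (differentiableAt_of_deriv_ne_zero hx.2).hasDerivAt
  filter_upwards [hf.eventually_ne (c := c) hx.2] with y hy hyS
  exact hy hyS.1

lemma fisherInformation_sq {f : ℝ → ℝ} (hf : Differentiable ℝ f) :
    fisherInformation (fun x ↦ f x ^ 2) = 4 * ∫ x, deriv f x ^ 2 := by
  rw [fisherInformation, ← integral_const_mul]
  -- The integrands can differ only at simple zeros of `f`, which are isolated and hence countable.
  refine integral_congr_ae ?_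
  filter_upwards [(countable_setOf_eq_and_deriv_ne_zero f 0).ae_notMem volume] with x hx
  have hderiv : deriv (fun x ↦ f x ^ 2) x = 2 * f x * deriv f x := by
    simpa using ((hf x).hasDerivAt.fun_pow 2).deriv
  rw [hderiv]
  by_cases hfx : f x = 0
  · have hdfx : deriv f x = 0 := by_contra fun h ↦ hx ⟨hfx, h⟩
    simp [hfx, hdfx]
  · field_simp
    ring

end FisherInformation

section GaussianWeight

open Polynomial

lemma integrable_eval_mul_exp_neg_mul_sq {b : ℝ} (hb : 0 < b) (p : ℝ[X]) :
    Integrable fun x ↦ p.eval x * exp (-b * x ^ 2) := by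
  induction p using Polynomial.induction_on' with
  | add p q hp hq =>
    simp only [eval_add, add_mul]
    exact hp.add hq
  | monomial k a =>
    have hk : (-1 : ℝ) < k := neg_one_lt_zero.trans_le k.cast_nonneg
    simpa [mul_assoc] using (integrable_rpow_mul_exp_neg_mul_sq hb hk).const_mul a

lemma hasDerivAt_eval_mul_exp_neg_mul_sq (b : ℝ) (p : ℝ[X]) (x : ℝ) :
    HasDerivAt (fun x ↦ p.eval x * exp (-b * x ^ 2))
      ((derivative p - C (2 * b) * X * p).eval x * exp (-b * x ^ 2)) x := by
  have hexp : HasDerivAt (fun x ↦ exp (-b * x ^ 2)) (exp (-b * x ^ 2) * (-b * (2 * x))) x := by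
    simpa using ((hasDerivAt_pow 2 x).const_mul (-b)).exp
  refine ((p.hasDerivAt x).mul hexp).congr_deriv ?_
  simp only [eval_sub, eval_mul, eval_C, eval_X]
  ring

/-- Integration of polynomials against the weight `e^{-x²}`, as a linear functional; the associated
inner product of `p` and `q` is `gaussianIntegral (p * q)`. The exponent is written `-1 * x ^ 2` to
match the lemmas on `exp (-b * x ^ 2)`. -/
noncomputable def gaussianIntegral : ℝ[X] →ₗ[ℝ] ℝ where
  toFun p := ∫ x, p.eval x * exp (-1 * x ^ 2)
  map_add' p q := by
    simp only [eval_add, add_mul]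
    exact integral_add (integrable_eval_mul_exp_neg_mul_sq one_pos p)
      (integrable_eval_mul_exp_neg_mul_sq one_pos q)
  map_smul' a p := by
    simp only [eval_smul, smul_eq_mul, mul_assoc, integral_const_mul, RingHom.id_apply]

lemma gaussianIntegral_apply (p : ℝ[X]) :
    gaussianIntegral p = ∫ x, p.eval x * exp (-x ^ 2) := by
  simp [gaussianIntegral]

lemma gaussianIntegral_one : gaussianIntegral 1 = √π := by
  simpa [gaussianIntegral_apply] using integral_gaussian 1

lemma gaussianIntegral_derivative (p : ℝ[X]) :
    gaussianIntegral (derivative p) = gaussianIntegral (2 * X * p) := by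
  rw [← sub_eq_zero, ← map_sub]
  refine integral_eq_zero_of_hasDerivAt_of_integrable (fun x ↦ ?_)
    (integrable_eval_mul_exp_neg_mul_sq one_pos _) (integrable_eval_mul_exp_neg_mul_sq one_pos p)
  simpa using hasDerivAt_eval_mul_exp_neg_mul_sq 1 p x

end GaussianWeight

section CreationOperator

open Polynomial

variable {R : Type*} [CommRing R]

/-- The creation operator `p ↦ 2 X p - p'`, which maps `H_n` to `H_{n+1}`. -/
noncomputable def hermiteRaising : R[X] →ₗ[R] R[X] :=
  LinearMap.mulLeft R (2 * X) - derivative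

lemma hermiteRaising_apply (p : R[X]) : hermiteRaising p = 2 * X * p - derivative p := rfl

lemma derivative_hermiteRaising (p : R[X]) :
    derivative (hermiteRaising p) = hermiteRaising (derivative p) + (2 : R) • p := by
  simp only [hermiteRaising_apply, derivative_sub, derivative_mul, derivative_ofNat, derivative_X,
    smul_eq_C_mul, C_ofNat]
  ring

lemma hermiteRaising_derivative_derivative {p : R[X]} {μ : R}
    (hp : hermiteRaising (derivative p) = μ • p) :
    hermiteRaising (derivative (derivative p)) = (μ - 2) • derivative p := by
  rw [eq_sub_of_add_eq (derivative_hermiteRaising (derivative p)).symm, hp, derivative_smul,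
    sub_smul]

lemma gaussianIntegral_derivative_mul (p q : ℝ[X]) :
    gaussianIntegral (derivative p * q) = gaussianIntegral (p * hermiteRaising q) := by
  have hsplit : derivative p * q = derivative (p * q) - p * derivative q := by
    rw [derivative_mul, add_sub_cancel_right]
  rw [hsplit, map_sub, gaussianIntegral_derivative, ← map_sub, hermiteRaising_apply]
  congr 1
  ring

lemma gaussianIntegral_hermiteRaising_sq (p : ℝ[X]) :
    gaussianIntegral (hermiteRaising p ^ 2) =
      gaussianIntegral (derivative p ^ 2) + 2 * gaussianIntegral (p ^ 2) := by
  calc gaussianIntegral (hermiteRaising p ^ 2)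
    _ = gaussianIntegral (derivative (hermiteRaising p) * p) := by
      rw [gaussianIntegral_derivative_mul, sq]
    _ = gaussianIntegral (p * hermiteRaising (derivative p)) + 2 * gaussianIntegral (p ^ 2) := by
      rw [derivative_hermiteRaising, add_mul, smul_mul_assoc, map_add, map_smul, smul_eq_mul,
        mul_comm _ p, sq p]
    _ = gaussianIntegral (derivative p ^ 2) + 2 * gaussianIntegral (p ^ 2) := by
      rw [← gaussianIntegral_derivative_mul, ← sq]

lemma gaussianIntegral_derivative_sq {p : ℝ[X]} {μ : ℝ}
    (hp : hermiteRaising (derivative p) = μ • p) :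
    gaussianIntegral (derivative p ^ 2) = μ * gaussianIntegral (p ^ 2) := by
  rw [sq, gaussianIntegral_derivative_mul, hp, mul_smul_comm, map_smul, smul_eq_mul, sq]

lemma gaussianIntegral_derivative_derivative_mul_self {p : ℝ[X]} {μ : ℝ}
    (hp : hermiteRaising (derivative p) = μ • p) :
    gaussianIntegral (derivative (derivative p) * p) = 0 := by
  have hp'' : hermiteRaising (derivative (derivative (derivative p))) =
      (μ - 2 - 2) • derivative (derivative p) :=
    hermiteRaising_derivative_derivative (hermiteRaising_derivative_derivative hp)
  have hsymm : μ * gaussianIntegral (derivative (derivative p) * p) =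
      (μ - 2 - 2) * gaussianIntegral (derivative (derivative p) * p) := by
    calc μ * gaussianIntegral (derivative (derivative p) * p)
      _ = gaussianIntegral (derivative (derivative p) * hermiteRaising (derivative p)) := by
        rw [hp, mul_smul_comm, map_smul, smul_eq_mul]
      _ = gaussianIntegral (p * hermiteRaising (derivative (derivative (derivative p)))) := by
        rw [← gaussianIntegral_derivative_mul, ← gaussianIntegral_derivative_mul, mul_comm]
      _ = (μ - 2 - 2) * gaussianIntegral (derivative (derivative p) * p) := by
        rw [hp'', mul_smul_comm, map_smul, smul_eq_mul, mul_comm p]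
  linarith

end CreationOperator

section PolynomialDensity

open Polynomial

lemma fisherInformation_eval_sq_mul_exp (p : ℝ[X]) :
    fisherInformation (fun x ↦ p.eval x ^ 2 * exp (-x ^ 2)) =
      gaussianIntegral ((hermiteRaising p - derivative p) ^ 2) := by
  have hexp (x : ℝ) : exp (-(1 / 2) * x ^ 2) ^ 2 = exp (-x ^ 2) := by
    rw [← exp_nat_mul]
    congr 1
    push_cast
    ring
  have hderiv := hasDerivAt_eval_mul_exp_neg_mul_sq (1 / 2) p
  have hsq := fisherInformation_sq fun x ↦ (hderiv x).differentiableAt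
  simp only [(hderiv _).deriv, mul_pow, hexp] at hsq
  rw [hsq, gaussianIntegral_apply, ← integral_const_mul]
  congr 1 with x
  simp only [hermiteRaising_apply, eval_pow, eval_sub, eval_mul, eval_C, eval_X, eval_ofNat]
  ring

lemma fisherInformation_eval_sq_mul_exp_of_eigenvector {p : ℝ[X]} {μ : ℝ}
    (hp : hermiteRaising (derivative p) = μ • p) :
    fisherInformation (fun x ↦ p.eval x ^ 2 * exp (-x ^ 2)) =
      (2 * μ + 2) * gaussianIntegral (p ^ 2) := by
  have hcross : gaussianIntegral (derivative p * hermiteRaising p) = 0 := by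
    rw [← gaussianIntegral_derivative_mul, gaussianIntegral_derivative_derivative_mul_self hp]
  have hexpand : (hermiteRaising p - derivative p) ^ 2 = hermiteRaising p ^ 2 +
      derivative p ^ 2 - (2 : ℝ) • (derivative p * hermiteRaising p) := by
    rw [smul_eq_C_mul, C_ofNat]
    ring
  rw [fisherInformation_eval_sq_mul_exp, hexpand, map_sub, map_add, map_smul, hcross,
    gaussianIntegral_hermiteRaising_sq, gaussianIntegral_derivative_sq hp, smul_zero]
  ring

end PolynomialDensity

section Hermite

open Polynomial

variable (R : Type*) [CommRing R]

/-- The physicists' Hermite polynomial `H_n` over a commutative ring, obtained by applying the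
creation operator `n` times to `1`. Mathlib's `Polynomial.hermite` is the probabilists' version. -/
noncomputable def physicistHermite : ℕ → R[X]
  | 0 => 1
  | n + 1 => hermiteRaising (physicistHermite n)

lemma physicistHermite_zero : physicistHermite R 0 = 1 := rfl

lemma physicistHermite_succ (n : ℕ) :
    physicistHermite R (n + 1) = hermiteRaising (physicistHermite R n) := rfl

lemma hermiteRaising_derivative_physicistHermite (n : ℕ) :
    hermiteRaising (derivative (physicistHermite R n)) = (2 * n : R) • physicistHermite R n := by
  induction n with
  | zero => simp [physicistHermite_zero]
  | succ n ih =>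
    rw [physicistHermite_succ, derivative_hermiteRaising, ih, ← add_smul, map_smul, Nat.cast_succ,
      mul_add_one]

lemma derivative_physicistHermite_succ (n : ℕ) :
    derivative (physicistHermite R (n + 1)) = (2 * (n + 1) : R) • physicistHermite R n := by
  rw [physicistHermite_succ, derivative_hermiteRaising, hermiteRaising_derivative_physicistHermite,
    ← add_smul, mul_add_one]

lemma hermiteH_eq_eval (n : ℕ) (x : ℝ) : hermiteH n x = (physicistHermite ℝ n).eval x := by
  induction n using Nat.twoStepInduction with
  | zero => simp [hermiteH, physicistHermite_zero]
  | one => simp [hermiteH, physicistHermite_succ, physicistHermite_zero, hermiteRaising_apply]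
  | more n ih ih' =>
    rw [hermiteH, ih, ih', physicistHermite_succ ℝ (n + 1), hermiteRaising_apply,
      derivative_physicistHermite_succ]
    simp

lemma gaussianIntegral_physicistHermite_sq (n : ℕ) :
    gaussianIntegral (physicistHermite ℝ n ^ 2) = 2 ^ n * n.factorial * √π := by
  induction n with
  | zero => simp [physicistHermite_zero, gaussianIntegral_one]
  | succ n ih =>
    calc gaussianIntegral (physicistHermite ℝ (n + 1) ^ 2)
      _ = gaussianIntegral (derivative (physicistHermite ℝ (n + 1)) * physicistHermite ℝ n) := by
        rw [gaussianIntegral_derivative_mul, ← physicistHermite_succ, sq]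
      _ = 2 * (n + 1) * gaussianIntegral (physicistHermite ℝ n ^ 2) := by
        rw [derivative_physicistHermite_succ, smul_mul_assoc, map_smul, smul_eq_mul, sq]
      _ = 2 ^ (n + 1) * (n + 1).factorial * √π := by
        rw [ih, Nat.factorial_succ]
        push_cast
        ring

lemma hermiteρ_eq_const_mul (n : ℕ) :
    hermiteρ n = fun x ↦ (2 ^ n * n.factorial * √π)⁻¹ *
      ((physicistHermite ℝ n).eval x ^ 2 * exp (-x ^ 2)) := by
  ext x
  rw [hermiteρ, hermiteH_eq_eval, div_eq_inv_mul]

lemma fisherInformation_hermiteρ (n : ℕ) : fisherInformation (hermiteρ n) = 4 * n + 2 := by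
  have hnorm : (2 ^ n * n.factorial * √π : ℝ) ≠ 0 := by positivity
  rw [hermiteρ_eq_const_mul, fisherInformation_const_mul,
    fisherInformation_eval_sq_mul_exp_of_eigenvector
      (hermiteRaising_derivative_physicistHermite ℝ n),
    gaussianIntegral_physicistHermite_sq, mul_left_comm, inv_mul_cancel₀ hnorm]
  ring

end Hermite

/-- For every `n ∈ ℕ`, the Fisher information of the Rakhmanov density of
the orthonormal Hermite polynomial equals `4n + 2`; equivalently, the Fisher length is
`(δx)_n = 1/√(4n+2)`. -/
theorem hermite_fisher (n : ℕ) :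
    (∫ x : ℝ, (deriv (hermiteρ n) x) ^ 2 / hermiteρ n x) = 4 * (n : ℝ) + 2 ∧
    (∫ x : ℝ, (deriv (hermiteρ n) x) ^ 2 / hermiteρ n x) ^ (-(1 / 2) : ℝ) =
      1 / Real.sqrt (4 * (n : ℝ) + 2) := by
  have hF : (∫ x : ℝ, (deriv (hermiteρ n) x) ^ 2 / hermiteρ n x) = 4 * (n : ℝ) + 2 :=
    fisherInformation_hermiteρ n
  refine ⟨hF, ?_⟩
  rw [hF, rpow_neg (by positivity), ← sqrt_eq_rpow, one_div]
end

section
/- For every n ∈ ℕ and every real α > 1, the Fisher information of the Rakhmanov density of the orthonormal Laguerre polynomial equals F[ρ_{n,α}] = ((2n+1)α + 1)/(α² − 1); equivalently, the Fisher length is (δx)_{n,α} = √((α² − 1)/((2n+1)α + 1)). -/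
open MeasureTheory Real

/-- The generalized Laguerre polynomial `L_n^{(α)}`. -/
noncomputable def laguerreL (α : ℝ) (n : ℕ) (x : ℝ) : ℝ :=
  ∑ k ∈ Finset.range (n + 1),
    (-1) ^ k * Real.Gamma ((n : ℝ) + α + 1) /
      (Real.Gamma ((k : ℝ) + α + 1) * ((n - k).factorial : ℝ) * (k.factorial : ℝ)) * x ^ k

/-- The Rakhmanov density of the orthonormal Laguerre polynomial
`p_n^{(α)}(x) = (n!/Γ(n+α+1))^{1/2} L_n^{(α)}(x)`, i.e.
`ρ_{n,α}(x) = p_n^{(α)}(x)^2 x^α e^{-x}`. -/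
noncomputable def laguerreρ (α : ℝ) (n : ℕ) (x : ℝ) : ℝ :=
  ((n.factorial : ℝ) / Real.Gamma ((n : ℝ) + α + 1)) * (laguerreL α n x) ^ 2 *
    x ^ α * Real.exp (-x)

/-!
With `w(x) = x ^ α * exp (-x)` and `P = L_n^{(α)}`, the density is `c * P ^ 2 * w`, so its Fisher
information is `c` times the integral of `(2 x P' + (α - x) P) ^ 2` against
`x ^ (α - 2) * exp (-x)`. The integral of `x ^ k` against `x ^ (a - 1) * exp (-x)` is
`Γ(a) * a (a + 1) ⋯ (a + k - 1)`, so integration against these weights, divided by `Γ(a)`, is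
algebraic. By the Chu–Vandermonde identity the moment of `L_n^{(α)}` with parameter `a = b` is
`binom(n + α - b, n)`, which vanishes for `b = α + 1, …, α + n`. Hence for parameter `α` the product
`q * P` with `deg q ≤ n` integrates to `q(0)`, and after integrating by parts everything is
expressed by `P(0)` and `P'(0) = -n P(0) / (α + 1)`.
-/

open Polynomial

section GammaMoment

variable {R : Type*} [CommRing R]

/-- The moment functional of the Gamma distribution of shape `a` and rate `1`, as a linear form on
polynomials: it sends `X ^ k` to the Pochhammer symbol `a (a + 1) ⋯ (a + k - 1)`. Defining it
algebraically makes it available for every `a`; for real `a > 0` it is integration against the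
density `x ^ (a - 1) * exp (-x) / Γ(a)` on `(0, ∞)`. -/
noncomputable def gammaMoment (a : R) : R[X] →ₗ[R] R :=
  lsum fun k => (ascPochhammer R k).eval a • LinearMap.id

theorem gammaMoment_monomial (a : R) (k : ℕ) (c : R) :
    gammaMoment a (monomial k c) = c * (ascPochhammer R k).eval a := by
  simp [gammaMoment, lsum, sum_monomial_index, mul_comm]

theorem gammaMoment_eq_sum_range (a : R) (p : R[X]) :
    gammaMoment a p =
      ∑ k ∈ Finset.range (p.natDegree + 1), p.coeff k * (ascPochhammer R k).eval a := by
  conv_lhs => rw [p.as_sum_range, map_sum]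
  exact Finset.sum_congr rfl fun k _ => gammaMoment_monomial a k _

theorem gammaMoment_C_mul (a c : R) (p : R[X]) :
    gammaMoment a (C c * p) = c * gammaMoment a p := by
  rw [← smul_eq_C_mul, map_smul, smul_eq_mul]

theorem gammaMoment_X_mul (a : R) (p : R[X]) :
    gammaMoment a (X * p) = a * gammaMoment (a + 1) p := by
  induction p using Polynomial.induction_on' with
  | add p q hp hq => simp only [mul_add, map_add, hp, hq]
  | monomial k c =>
    rw [X_mul_monomial, gammaMoment_monomial, gammaMoment_monomial, ascPochhammer_succ_left]
    simp only [eval_mul, eval_X, eval_comp, eval_add, eval_one]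
    ring

theorem gammaMoment_X_pow_mul (a : R) (j : ℕ) (p : R[X]) :
    gammaMoment a (X ^ j * p) = (ascPochhammer R j).eval a * gammaMoment (a + j) p := by
  induction j generalizing p with
  | zero => simp
  | succ j ih =>
    rw [pow_succ, mul_assoc, ih, gammaMoment_X_mul, ascPochhammer_succ_eval, Nat.cast_succ,
      add_assoc, mul_assoc]

/-- Integration by parts: `x * d/dx` is adjoint to `x - a - x * d/dx` for the weight
`x ^ (a - 1) * exp (-x)`. -/
theorem gammaMoment_X_mul_derivative (a : R) (p : R[X]) :
    gammaMoment a (X * derivative p) = gammaMoment a ((X - C a) * p) := by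
  induction p using Polynomial.induction_on' with
  | add p q hp hq => simp only [mul_add, map_add, hp, hq]
  | monomial k c =>
    have hX : X * derivative (monomial k c) = monomial k (k * c) := by
      cases k <;> simp [X_mul_monomial, mul_comm]
    rw [hX, sub_mul, map_sub, X_mul_monomial, C_mul_monomial]
    simp only [gammaMoment_monomial, ascPochhammer_succ_eval]
    ring

/-- The polynomial `x p ρ' / ρ` for the density `ρ = p ^ 2 * x ^ α * exp (-x)`: the score `ρ' / ρ`
with its denominators cleared. -/
noncomputable def scorePoly (α : R) (p : R[X]) : R[X] :=
  2 * (X * derivative p) + (C α - X) * p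

theorem gammaMoment_sub_one_sq_scorePoly (α : R) (p : R[X]) :
    gammaMoment (α - 1) (scorePoly α p ^ 2) =
      4 * gammaMoment (α - 1) (X * (X * derivative p ^ 2)) +
        α * (2 - α) * gammaMoment (α - 1) (p ^ 2) +
        2 * α * gammaMoment (α - 1) (X * p ^ 2) - gammaMoment (α - 1) (X * (X * p ^ 2)) := by
  set G := (C α - X) * p ^ 2 with hG
  have hsq : scorePoly α p ^ 2 =
      C 4 * (X * (X * derivative p ^ 2)) + C 2 * (X * derivative G - (X - C (α - 1)) * G) +
        C (α * (2 - α)) * p ^ 2 + C (2 * α) * (X * p ^ 2) - X * (X * p ^ 2) := by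
    simp only [scorePoly, hG, derivative_mul, derivative_sub, derivative_C, derivative_X,
      derivative_sq, C_mul, C_sub, C_1, C_ofNat]
    ring
  simp only [hsq, map_add, map_sub, gammaMoment_C_mul, gammaMoment_X_mul_derivative, sub_self,
    mul_zero, add_zero]

end GammaMoment

section LaguerrePoly

variable {K : Type*} [Field K] [CharZero K]

/-- The Laguerre polynomial `L_n^{(α)}` in the binomial form
`∑ k ≤ n, (-1) ^ k * binom(n + α, n - k) * X ^ k / k!`, which makes sense for every `α`. -/
noncomputable def laguerrePoly (α : K) (n : ℕ) : K[X] :=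
  ∑ k ∈ Finset.range (n + 1), monomial k ((-1) ^ k / k.factorial * Ring.choose (n + α) (n - k))

theorem coeff_laguerrePoly (α : K) (n k : ℕ) : (laguerrePoly α n).coeff k =
    if k ≤ n then (-1) ^ k / k.factorial * Ring.choose (n + α) (n - k) else 0 := by
  simp [laguerrePoly, finsetSum_coeff, coeff_monomial, Finset.sum_ite_eq']

theorem natDegree_laguerrePoly_le (α : K) (n : ℕ) : (laguerrePoly α n).natDegree ≤ n :=
  natDegree_le_iff_coeff_eq_zero.mpr fun k hk => by
    rw [coeff_laguerrePoly, if_neg hk.not_ge]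

theorem add_one_mul_coeff_one_laguerrePoly (α : K) (n : ℕ) :
    (α + 1) * (laguerrePoly α n).coeff 1 = -n * (laguerrePoly α n).coeff 0 := by
  cases n with
  | zero => simp [coeff_laguerrePoly]
  | succ m =>
    have h := Ring.choose_smul_choose ((m + 1 : ℕ) + α) m.le_succ
    have hsub : ((m + 1 : ℕ) + α) - m = α + 1 := by push_cast; ring
    simp only [Nat.succ_eq_add_one, Nat.choose_succ_self_right, Nat.add_sub_cancel_left,
      Ring.choose_one_right, nsmul_eq_mul, hsub] at h
    simp only [coeff_laguerrePoly, Nat.le_add_left, if_true, pow_one, pow_zero,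
      Nat.factorial_one, Nat.factorial_zero, Nat.cast_one, div_one, one_mul, Nat.add_sub_cancel,
      Nat.sub_zero]
    linear_combination h

theorem choose_neg_eq_ascPochhammer_eval (b : K) (k : ℕ) :
    Ring.choose (-b) k = (-1) ^ k / k.factorial * (ascPochhammer K k).eval b := by
  have hk : (k.factorial : K) ≠ 0 := Nat.cast_ne_zero.mpr k.factorial_ne_zero
  rw [← ascPochhammer_smeval_eq_eval, ← Ring.factorial_nsmul_multichoose_eq_ascPochhammer,
    nsmul_eq_mul, ← mul_assoc, div_mul_cancel₀ _ hk, Ring.choose_neg', Units.smul_def,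
    zsmul_eq_mul, Int.cast_negOnePow_natCast]

theorem gammaMoment_laguerrePoly (b α : K) (n : ℕ) :
    gammaMoment b (laguerrePoly α n) = Ring.choose (n + α - b) n := by
  rw [sub_eq_neg_add, Ring.add_choose_eq n (Commute.all _ _),
    Finset.Nat.sum_antidiagonal_eq_sum_range_succ_mk, laguerrePoly, map_sum]
  refine Finset.sum_congr rfl fun k _ => ?_
  rw [gammaMoment_monomial, choose_neg_eq_ascPochhammer_eval]
  ring

theorem gammaMoment_X_pow_mul_laguerrePoly (α : K) {n j : ℕ} (hj : j ≤ n) :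
    gammaMoment α (X ^ j * laguerrePoly α n) = if j = 0 then 1 else 0 := by
  rw [gammaMoment_X_pow_mul, gammaMoment_laguerrePoly,
    show n + α - (α + j) = ((n - j : ℕ) : K) by push_cast [hj]; ring, Ring.choose_natCast]
  split_ifs with h
  · simp [h]
  · rw [Nat.choose_eq_zero_of_lt (by omega), Nat.cast_zero, mul_zero]

theorem gammaMoment_mul_laguerrePoly (α : K) {n : ℕ} {q : K[X]} (hq : q.natDegree ≤ n) :
    gammaMoment α (q * laguerrePoly α n) = q.coeff 0 := by
  conv_lhs => rw [q.as_sum_range_C_mul_X_pow' (Nat.lt_succ_of_le hq), Finset.sum_mul, map_sum]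
  rw [Finset.sum_eq_single_of_mem 0 (by simp)]
  · rw [mul_assoc, gammaMoment_C_mul, gammaMoment_X_pow_mul_laguerrePoly α n.zero_le, if_pos rfl,
      mul_one]
  · intro j hj hj0
    rw [mul_assoc, gammaMoment_C_mul,
      gammaMoment_X_pow_mul_laguerrePoly α (Finset.mem_range_succ_iff.mp hj), if_neg hj0, mul_zero]

theorem gammaMoment_X_mul_derivative_mul_laguerrePoly (α : K) {n : ℕ} {q : K[X]}
    (hq : q.natDegree ≤ n) : gammaMoment α (X * derivative q * laguerrePoly α n) = 0 := by
  have hdeg : (X * derivative q).natDegree ≤ n :=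
    natDegree_le_iff_coeff_eq_zero.mpr fun k hk => by
      cases k with
      | zero => omega
      | succ k =>
        rw [coeff_X_mul, coeff_derivative, coeff_eq_zero_of_natDegree_lt (hq.trans_lt hk), zero_mul]
  rw [gammaMoment_mul_laguerrePoly α hdeg, coeff_X_mul_zero]

theorem gammaMoment_sq_laguerrePoly (α : K) (n : ℕ) :
    gammaMoment α (laguerrePoly α n ^ 2) = (laguerrePoly α n).coeff 0 := by
  rw [sq, gammaMoment_mul_laguerrePoly α (natDegree_laguerrePoly_le α n)]

theorem gammaMoment_X_mul_sq_laguerrePoly (α : K) (n : ℕ) :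
    gammaMoment α (X * laguerrePoly α n ^ 2) = α * (laguerrePoly α n).coeff 0 := by
  have ibp := gammaMoment_X_mul_derivative α (laguerrePoly α n ^ 2)
  have hderiv : X * derivative (laguerrePoly α n ^ 2) =
      C 2 * (X * derivative (laguerrePoly α n) * laguerrePoly α n) := by
    rw [derivative_sq]
    ring
  rw [hderiv, gammaMoment_C_mul, sub_mul, map_sub, gammaMoment_C_mul,
    gammaMoment_X_mul_derivative_mul_laguerrePoly α (natDegree_laguerrePoly_le α n), mul_zero,
    gammaMoment_sq_laguerrePoly] at ibp
  exact sub_eq_zero.mp ibp.symm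

theorem gammaMoment_X_mul_sq_derivative_laguerrePoly (α : K) (n : ℕ) :
    gammaMoment α (X * derivative (laguerrePoly α n) ^ 2) = -α * (laguerrePoly α n).coeff 1 := by
  have hP := natDegree_laguerrePoly_le α n
  have hP' : (derivative (laguerrePoly α n)).natDegree ≤ n :=
    (natDegree_derivative_le _).trans ((Nat.sub_le _ _).trans hP)
  have ibp := gammaMoment_X_mul_derivative α (derivative (laguerrePoly α n) * laguerrePoly α n)
  have hderiv : X * derivative (derivative (laguerrePoly α n) * laguerrePoly α n) =
      X * derivative (derivative (laguerrePoly α n)) * laguerrePoly α n +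
        X * derivative (laguerrePoly α n) ^ 2 := by
    rw [derivative_mul]
    ring
  rw [hderiv, map_add, gammaMoment_X_mul_derivative_mul_laguerrePoly α hP', zero_add, sub_mul,
    map_sub, ← mul_assoc, gammaMoment_X_mul_derivative_mul_laguerrePoly α hP, gammaMoment_C_mul,
    gammaMoment_mul_laguerrePoly α hP', coeff_derivative] at ibp
  rw [ibp]
  simp

theorem gammaMoment_sub_one_sq_laguerrePoly (α : K) (n : ℕ) :
    gammaMoment (α - 1) (laguerrePoly α n ^ 2) =
      (n + 1) * (laguerrePoly α n).coeff 0 + (α - 1) * (laguerrePoly α n).coeff 1 := by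
  set P := laguerrePoly α n with hP
  have hsplit : P ^ 2 = C (P.coeff 0) * P + X * (P.divX * P) := by
    linear_combination -P * P.X_mul_divX_add
  have hmean : gammaMoment (α - 1) P = n + 1 := by
    rw [hP, gammaMoment_laguerrePoly, show n + α - (α - 1) = ((n + 1 : ℕ) : K) by push_cast; ring,
      Ring.choose_natCast, Nat.choose_succ_self_right, Nat.cast_succ]
  have hdeg : P.divX.natDegree ≤ n :=
    natDegree_divX_le.trans (natDegree_laguerrePoly_le α n)
  rw [hsplit, map_add, gammaMoment_C_mul, hmean, gammaMoment_X_mul, sub_add_cancel, hP,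
    gammaMoment_mul_laguerrePoly α hdeg, coeff_divX]
  ring

theorem gammaMoment_sub_one_sq_scorePoly_laguerrePoly (α : K) (n : ℕ) :
    (α + 1) * gammaMoment (α - 1) (scorePoly α (laguerrePoly α n) ^ 2) =
      α * ((2 * n + 1) * α + 1) * (laguerrePoly α n).coeff 0 := by
  rw [gammaMoment_sub_one_sq_scorePoly, gammaMoment_sub_one_sq_laguerrePoly]
  simp only [gammaMoment_X_mul (α - 1), sub_add_cancel, gammaMoment_sq_laguerrePoly,
    gammaMoment_X_mul_sq_laguerrePoly, gammaMoment_X_mul_sq_derivative_laguerrePoly]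
  linear_combination
    (α * (2 - α) * (α - 1) - 4 * α * (α - 1)) * add_one_mul_coeff_one_laguerrePoly α n

end LaguerrePoly

theorem Gamma_natCast_add {a : ℝ} (ha : 0 < a) (k : ℕ) :
    Gamma (k + a) = Gamma a * (ascPochhammer ℝ k).eval a := by
  induction k with
  | zero => simp
  | succ k ih =>
    rw [ascPochhammer_succ_eval, Nat.cast_succ, add_right_comm, Gamma_add_one (by positivity), ih]
    ring

theorem integral_exp_mul_rpow_mul_eval {a : ℝ} (ha : 0 < a) (p : ℝ[X]) :
    ∫ x in Set.Ioi 0, exp (-x) * x ^ (a - 1) * p.eval x = Gamma a * gammaMoment a p := by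
  have hexpand : Set.EqOn (fun x => exp (-x) * x ^ (a - 1) * p.eval x)
      (fun x => ∑ k ∈ Finset.range (p.natDegree + 1),
        p.coeff k * (exp (-x) * x ^ (k + a - 1))) (Set.Ioi 0) := fun x (hx : 0 < x) => by
    simp only [eval_eq_sum_range, Finset.mul_sum]
    refine Finset.sum_congr rfl fun k _ => ?_
    rw [add_sub_assoc, rpow_add hx, rpow_natCast]
    ring
  rw [setIntegral_congr_fun measurableSet_Ioi hexpand, integral_finsetSum _ fun k _ =>
    (GammaIntegral_convergent (by positivity)).const_mul _, gammaMoment_eq_sum_range,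
    Finset.mul_sum]
  refine Finset.sum_congr rfl fun k _ => ?_
  rw [integral_const_mul, ← Gamma_eq_integral (by positivity),
    Gamma_natCast_add ha]
  ring

/-- The unnormalised density `c * p ^ 2 * x ^ α * exp (-x)` on `(0, ∞)`; the Rakhmanov density is
the case where `p` is a Laguerre polynomial and `c` its normalising constant. -/
noncomputable def gammaWeightedSq (c α : ℝ) (p : ℝ[X]) (x : ℝ) : ℝ :=
  c * p.eval x ^ 2 * x ^ α * exp (-x)

theorem hasDerivAt_gammaWeightedSq (c α : ℝ) (p : ℝ[X]) {x : ℝ} (hx : 0 < x) :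
    HasDerivAt (gammaWeightedSq c α p)
      (c * p.eval x * (scorePoly α p).eval x * x ^ (α - 1) * exp (-x)) x := by
  have hpow : x ^ α = x ^ (α - 1) * x := by rw [← rpow_add_one hx.ne', sub_add_cancel]
  have hderiv := ((((p.hasDerivAt x).fun_pow 2).const_mul c).fun_mul
    (hasDerivAt_rpow_const (p := α) (Or.inl hx.ne'))).fun_mul (hasDerivAt_neg x).exp
  refine hderiv.congr_deriv ?_
  rw [hpow]
  simp only [scorePoly, eval_add, eval_mul, eval_sub, eval_C, eval_X, eval_ofNat]
  push_cast
  ring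

theorem integral_sq_deriv_div_gammaWeightedSq (c : ℝ) {α : ℝ} (hα : 1 < α) {p : ℝ[X]}
    (hp : p ≠ 0) :
    ∫ x in Set.Ioi 0, deriv (gammaWeightedSq c α p) x ^ 2 / gammaWeightedSq c α p x =
      c * (Gamma (α - 1) * gammaMoment (α - 1) (scorePoly α p ^ 2)) := by
  -- At a root of `p` the integrand is the junk value `0 / 0 = 0`, hence only an a.e. equality.
  have hroots : ∀ᵐ x : ℝ, p.eval x ≠ 0 :=
    ae_iff.mpr (by simpa using (finite_setOfPred_isRoot hp).measure_zero volume)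
  rw [← integral_exp_mul_rpow_mul_eval (sub_pos.mpr hα), ← integral_const_mul]
  refine setIntegral_congr_ae measurableSet_Ioi ?_
  filter_upwards [hroots] with x hpx (hx : 0 < x)
  have hpow : x ^ α = x ^ (α - 1) * x := by rw [← rpow_add_one hx.ne', sub_add_cancel]
  have hpow' : x ^ (α - 1) = x ^ (α - 1 - 1) * x := by rw [← rpow_add_one hx.ne', sub_add_cancel]
  have hrpow : x ^ (α - 1 - 1) ≠ 0 := (rpow_pos_of_pos hx _).ne'
  rw [(hasDerivAt_gammaWeightedSq c α p hx).deriv, gammaWeightedSq, hpow, hpow', eval_pow]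
  field_simp

theorem choose_eq_Gamma_div {r : ℝ} {m : ℕ} (h : 0 < r - m + 1) :
    Ring.choose r m = Gamma (r + 1) / (Gamma (r - m + 1) * m.factorial) := by
  have hchoose : m.factorial * Ring.choose r m = (ascPochhammer ℝ m).eval (r - m + 1) := by
    rw [← ascPochhammer_smeval_eq_eval, ← Ring.factorial_nsmul_multichoose_eq_ascPochhammer,
      nsmul_eq_mul, Ring.choose]
  have hGamma : Gamma (r + 1) = Gamma (r - m + 1) * (ascPochhammer ℝ m).eval (r - m + 1) := by
    rw [← Gamma_natCast_add h]
    ring_nf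
  have hGamma_ne : Gamma (r - m + 1) ≠ 0 := (Gamma_pos_of_pos h).ne'
  rw [hGamma, ← hchoose, mul_div_mul_left _ _ hGamma_ne,
    mul_div_cancel_left₀ _ (Nat.cast_ne_zero.mpr m.factorial_ne_zero)]

theorem eval_laguerrePoly {α : ℝ} (hα : -1 < α) (n : ℕ) (x : ℝ) :
    (laguerrePoly α n).eval x = laguerreL α n x := by
  rw [laguerrePoly, laguerreL, eval_finsetSum]
  refine Finset.sum_congr rfl fun k hk => ?_
  have hsub : (n : ℝ) + α - (n - k : ℕ) = k + α := by
    rw [Nat.cast_sub (Finset.mem_range_succ_iff.mp hk)]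
    ring
  have hpos : 0 < (k : ℝ) + α + 1 := by linarith [k.cast_nonneg (α := ℝ)]
  rw [eval_monomial, choose_eq_Gamma_div (by rwa [hsub]), hsub]
  ring

theorem coeff_zero_laguerrePoly {α : ℝ} (hα : -1 < α) (n : ℕ) :
    (laguerrePoly α n).coeff 0 = Gamma (n + α + 1) / (Gamma (α + 1) * n.factorial) := by
  have hsub : (n : ℝ) + α - n = α := add_sub_cancel_left _ _
  rw [coeff_laguerrePoly, if_pos n.zero_le, Nat.sub_zero,
    choose_eq_Gamma_div (by rw [hsub]; linarith), hsub]
  simp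

theorem laguerreρ_eq_gammaWeightedSq {α : ℝ} (hα : -1 < α) (n : ℕ) :
    laguerreρ α n = gammaWeightedSq (n.factorial / Gamma (n + α + 1)) α (laguerrePoly α n) := by
  funext x
  rw [laguerreρ, gammaWeightedSq, eval_laguerrePoly hα]

theorem laguerrePoly_ne_zero {α : ℝ} (hα : -1 < α) (n : ℕ) : laguerrePoly α n ≠ 0 := by
  intro h
  have hcoeff := coeff_zero_laguerrePoly hα n
  have hnum : 0 < Gamma (n + α + 1) :=
    Gamma_pos_of_pos (by linarith [n.cast_nonneg (α := ℝ)])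
  have hden : 0 < Gamma (α + 1) := Gamma_pos_of_pos (by linarith)
  rw [h, coeff_zero] at hcoeff
  exact absurd hcoeff.symm (by positivity)

theorem integral_sq_deriv_div_laguerreρ (n : ℕ) {α : ℝ} (hα : 1 < α) :
    ∫ x in Set.Ioi 0, deriv (laguerreρ α n) x ^ 2 / laguerreρ α n x =
      ((2 * n + 1) * α + 1) / (α ^ 2 - 1) := by
  have hα' : -1 < α := by linarith
  have hsub : α - 1 ≠ 0 := by linarith
  have hadd : α + 1 ≠ 0 := by linarith
  have hΓn : Gamma (n + α + 1) ≠ 0 := (Gamma_pos_of_pos (by positivity)).ne'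
  have hΓ : Gamma (α - 1) ≠ 0 := (Gamma_pos_of_pos (by linarith)).ne'
  have hΓα : Gamma (α + 1) = α * ((α - 1) * Gamma (α - 1)) := by
    rw [← Gamma_add_one hsub, sub_add_cancel, Gamma_add_one (by linarith)]
  have hscore : gammaMoment (α - 1) (scorePoly α (laguerrePoly α n) ^ 2) =
      α * ((2 * n + 1) * α + 1) * (laguerrePoly α n).coeff 0 / (α + 1) :=
    eq_div_of_mul_eq hadd
      ((mul_comm _ _).trans (gammaMoment_sub_one_sq_scorePoly_laguerrePoly α n))
  rw [laguerreρ_eq_gammaWeightedSq hα',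
    integral_sq_deriv_div_gammaWeightedSq _ hα (laguerrePoly_ne_zero hα' n), hscore,
    coeff_zero_laguerrePoly hα', hΓα, show α ^ 2 - 1 = (α - 1) * (α + 1) by ring]
  field_simp [hΓn, hΓ]

/-- For every `n ∈ ℕ` and real `α > 1`, the Fisher information of the
Rakhmanov density of the orthonormal Laguerre polynomial equals `((2n+1)α + 1)/(α² − 1)`;
equivalently, the Fisher length is `√((α² − 1)/((2n+1)α + 1))`. -/
theorem laguerre_fisher (n : ℕ) (α : ℝ) (hα : 1 < α) :
    (∫ x in Set.Ioi (0 : ℝ), (deriv (laguerreρ α n) x) ^ 2 / laguerreρ α n x) =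
      ((2 * (n : ℝ) + 1) * α + 1) / (α ^ 2 - 1) ∧
    (∫ x in Set.Ioi (0 : ℝ), (deriv (laguerreρ α n) x) ^ 2 / laguerreρ α n x) ^
        (-(1 / 2) : ℝ) =
      Real.sqrt ((α ^ 2 - 1) / ((2 * (n : ℝ) + 1) * α + 1)) := by
  have hfisher := integral_sq_deriv_div_laguerreρ n hα
  have hnonneg : 0 ≤ ((2 * (n : ℝ) + 1) * α + 1) / (α ^ 2 - 1) :=
    div_nonneg (by positivity) (by nlinarith)
  refine ⟨hfisher, ?_⟩
  rw [hfisher, rpow_neg hnonneg, ← sqrt_eq_rpow, ← sqrt_inv, inv_div]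
end

section
/- For every n ∈ ℕ and reals α > 1, β > 1, the Fisher information of the Rakhmanov density of the orthonormal Jacobi polynomial equals F[ρ_{n,α,β}] = (2n+α+β+1)/(4(n+α+β−1)) · [ n(n+α+β−1)( (n+α)/(β+1) + 2 + (n+β)/(α+1) ) + (n+1)(n+α+β)( (n+α)/(β−1) + 2 + (n+β)/(α−1) ) ]. -/
open MeasureTheory Real

/-- The Jacobi polynomial `P_n^{(α,β)}`. -/
noncomputable def jacobiP (α β : ℝ) (n : ℕ) (x : ℝ) : ℝ :=
  ∑ s ∈ Finset.range (n + 1),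
    (Real.Gamma ((n : ℝ) + α + 1) / (Real.Gamma (α + (s : ℝ) + 1) * ((n - s).factorial : ℝ))) *
    (Real.Gamma ((n : ℝ) + β + 1) / (Real.Gamma ((n : ℝ) + β - (s : ℝ) + 1) * (s.factorial : ℝ))) *
    ((x - 1) / 2) ^ s * ((x + 1) / 2) ^ (n - s)

/-- The normalization constant `h_n` of the Jacobi polynomials. -/
noncomputable def jacobih (α β : ℝ) (n : ℕ) : ℝ :=
  2 ^ (α + β + 1) * Real.Gamma ((n : ℝ) + α + 1) * Real.Gamma ((n : ℝ) + β + 1) /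
    ((2 * (n : ℝ) + α + β + 1) * (n.factorial : ℝ) * Real.Gamma ((n : ℝ) + α + β + 1))

/-- The Rakhmanov density of the orthonormal Jacobi polynomial
`p_n^{(α,β)}(x) = h_n^{-1/2} P_n^{(α,β)}(x)`, i.e.
`ρ_{n,α,β}(x) = p_n^{(α,β)}(x)^2 (1-x)^α (1+x)^β`. -/
noncomputable def jacobiρ (α β : ℝ) (n : ℕ) (x : ℝ) : ℝ :=
  (jacobiP α β n x) ^ 2 / jacobih α β n * (1 - x) ^ α * (1 + x) ^ β

/-!
With `w_{a,b} = (1 - x)^a (1 + x)^b`, `P = P_n^{(α,β)}` and `ρ = P² w_{α,β} / h_n` one has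
`ρ'² / ρ = (P' w_{α,β} + (P w_{α,β})')² / (h_n w_{α,β})`. Here `P'` is a multiple of
`P_{n-1}^{(α+1,β+1)}`, and by Rodrigues' formula `(P w_{α,β})'` is a multiple of
`P_{n+1}^{(α-1,β-1)} w_{α-1,β-1}`. Hence the cross term vanishes by orthogonality for the weight
`w_{α-1,β-1}`, and both squares are integrals of the form `∫ (P_m^{(a,b)})² w_{a-1,b-1}`. Such an
integral comes out of `∫ (((a + b) x + b - a) (P_m^{(a,b)})² w_{a,b})' = 0`: dividing by
`w_{a-1,b-1}`, the linear factor contributes the constant `-4ab` plus a multiple of `1 - x²`, and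
orthogonality reduces every term but the wanted integral to a multiple of the norm `h_m`.
-/

open Polynomial Finset

section Pairs

variable {M : Type*} [AddCommMonoid M]

lemma sum_antidiagonal_succ_nsmul_add_nsmul (n : ℕ) (f g : ℕ × ℕ → M) :
    ∑ ij ∈ antidiagonal (n + 1), (ij.1 • f ij + ij.2 • g ij) =
      ∑ ij ∈ antidiagonal n,
        ((ij.1 + 1) • f (ij.1 + 1, ij.2) + (ij.2 + 1) • g (ij.1, ij.2 + 1)) := by
  rw [sum_add_distrib, Nat.sum_antidiagonal_succ, Nat.sum_antidiagonal_succ', sum_add_distrib]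
  simp only [zero_nsmul, zero_add]

lemma nsmul_sum_antidiagonal_succ (n : ℕ) (f : ℕ × ℕ → M) :
    (n + 1) • ∑ ij ∈ antidiagonal (n + 1), f ij =
      ∑ ij ∈ antidiagonal n,
        ((ij.1 + 1) • f (ij.1 + 1, ij.2) + (ij.2 + 1) • f (ij.1, ij.2 + 1)) := by
  rw [← sum_antidiagonal_succ_nsmul_add_nsmul, smul_sum]
  refine sum_congr rfl fun ij hij => ?_
  rw [← add_nsmul, mem_antidiagonal.mp hij]

end Pairs

lemma inv_Gamma_eq_self_mul_inv_Gamma_add_one (s : ℝ) :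
    (Gamma s)⁻¹ = s * (Gamma (s + 1))⁻¹ := by
  rcases eq_or_ne s 0 with rfl | hs
  · simp
  · rw [Gamma_add_one hs, mul_inv, mul_inv_cancel_left₀ hs]

/-- The generalized binomial coefficient `(i + j + a).choose j` for real `a`. Indexing by the two
parts `i` and `j` avoids the truncated subtraction `n - s` in `jacobiP`. -/
noncomputable def gammaChoose (a : ℝ) (i j : ℕ) : ℝ :=
  Gamma (i + j + a + 1) / (Gamma (a + i + 1) * j.factorial)

lemma gammaChoose_succ_left (a : ℝ) (i j : ℕ) :
    gammaChoose a (i + 1) j = gammaChoose (a + 1) i j := by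
  unfold gammaChoose
  push_cast
  ring_nf

lemma add_one_mul_gammaChoose_succ_right (a : ℝ) (i j : ℕ) :
    (j + 1) * gammaChoose a i (j + 1) = (a + 1 + i) * gammaChoose (a + 1) i j := by
  have hΓ := inv_Gamma_eq_self_mul_inv_Gamma_add_one (a + i + 1)
  have hj : (j : ℝ) + 1 ≠ 0 := by positivity
  simp only [gammaChoose, Nat.factorial_succ, Nat.cast_mul, Nat.cast_add, Nat.cast_one,
    div_eq_mul_inv, mul_inv]
  rw [hΓ, show (i : ℝ) + (j + 1) + a + 1 = i + j + (a + 1) + 1 by ring,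
    show a + 1 + (i : ℝ) + 1 = a + i + 1 + 1 by ring]
  field_simp
  ring

lemma gammaChoose_zero_right {a : ℝ} (ha : -1 < a) : gammaChoose a 0 0 = 1 := by
  have hΓ : Gamma (a + 1) ≠ 0 := (Gamma_pos_of_pos (by linarith)).ne'
  simp [gammaChoose, hΓ]

/-- The basis element `((x - 1) / 2) ^ i * ((x + 1) / 2) ^ j` in which `jacobiP` is expanded. -/
noncomputable def jacobiBasis (i j : ℕ) : ℝ[X] :=
  (C 2⁻¹ * (X - 1)) ^ i * (C 2⁻¹ * (X + 1)) ^ j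

/-- The Jacobi polynomial `jacobiP α β n` as an element of `ℝ[X]`. -/
noncomputable def jacobiPoly (α β : ℝ) (n : ℕ) : ℝ[X] :=
  ∑ ij ∈ antidiagonal n,
    (gammaChoose α ij.1 ij.2 * gammaChoose β ij.2 ij.1) • jacobiBasis ij.1 ij.2

lemma eval_jacobiPoly (α β : ℝ) (n : ℕ) (x : ℝ) :
    (jacobiPoly α β n).eval x = jacobiP α β n x := by
  rw [jacobiPoly, eval_finsetSum, jacobiP, Nat.sum_antidiagonal_eq_sum_range_succ_mk]
  refine sum_congr rfl fun s hs => ?_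
  have hs : s ≤ n := mem_range_succ_iff.mp hs
  simp only [gammaChoose, jacobiBasis, eval_smul, eval_mul, eval_pow, eval_C, eval_sub, eval_add,
    eval_X, eval_one, smul_eq_mul, Nat.cast_sub hs]
  rw [show (s : ℝ) + (n - s) + α + 1 = n + α + 1 by ring,
    show (n : ℝ) - s + s + β + 1 = n + β + 1 by ring,
    show β + ((n : ℝ) - s) + 1 = n + β - s + 1 by ring]
  ring

lemma natDegree_jacobiBasis_le (i j : ℕ) : (jacobiBasis i j).natDegree ≤ i + j := by
  unfold jacobiBasis
  compute_degree

lemma natDegree_jacobiPoly_le (α β : ℝ) (n : ℕ) : (jacobiPoly α β n).natDegree ≤ n := by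
  refine natDegree_sum_le_of_forall_le _ _ fun ij hij => (natDegree_smul_le _ _).trans ?_
  exact (natDegree_jacobiBasis_le _ _).trans (mem_antidiagonal.mp hij).le

lemma jacobiPoly_zero {α β : ℝ} (hα : -1 < α) (hβ : -1 < β) : jacobiPoly α β 0 = 1 := by
  simp [jacobiPoly, jacobiBasis, gammaChoose_zero_right hα, gammaChoose_zero_right hβ]

lemma derivative_jacobiBasis (i j : ℕ) :
    derivative (jacobiBasis i j) =
      i • ((2⁻¹ : ℝ) • jacobiBasis (i - 1) j) + j • ((2⁻¹ : ℝ) • jacobiBasis i (j - 1)) := by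
  simp only [jacobiBasis, derivative_mul, derivative_pow, derivative_C, derivative_X,
    derivative_add, derivative_sub, derivative_one, nsmul_eq_mul, smul_eq_C_mul, C_eq_natCast]
  ring

theorem derivative_jacobiPoly_succ (α β : ℝ) (n : ℕ) :
    derivative (jacobiPoly α β (n + 1)) =
      ((n + α + β + 2) / 2) • jacobiPoly (α + 1) (β + 1) n := by
  simp only [jacobiPoly, derivative_sum, derivative_smul, derivative_jacobiBasis, smul_add,
    smul_comm _ (_ : ℕ) (_ : ℝ[X])]
  rw [sum_antidiagonal_succ_nsmul_add_nsmul, smul_sum]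
  refine sum_congr rfl fun ⟨i, j⟩ hij => ?_
  have hn : (i : ℝ) + j = n := mod_cast mem_antidiagonal.mp hij
  have hα := add_one_mul_gammaChoose_succ_right α i j
  have hβ := add_one_mul_gammaChoose_succ_right β j i
  simp only [Nat.add_sub_cancel, ← Nat.cast_smul_eq_nsmul ℝ, smul_smul, ← add_smul,
    gammaChoose_succ_left]
  congr 1
  push_cast
  linear_combination 2⁻¹ * gammaChoose (α + 1) i j * hβ +
    2⁻¹ * gammaChoose (β + 1) j i * hα +
    2⁻¹ * gammaChoose (α + 1) i j * gammaChoose (β + 1) j i * hn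

section Raise

variable (a b : ℝ)

/-- The operator `p ↦ w⁻¹ (1 - x²) (w p)'` on polynomials, where `w` is the Jacobi weight
`(1 - x) ^ a * (1 + x) ^ b`. -/
noncomputable def jacobiRaise : ℝ[X] →ₗ[ℝ] ℝ[X] :=
  LinearMap.mulLeft ℝ (1 - X ^ 2) ∘ₗ derivative +
    LinearMap.mulLeft ℝ (C b * (1 - X) - C a * (1 + X))

lemma jacobiRaise_apply (p : ℝ[X]) :
    jacobiRaise a b p = (1 - X ^ 2) * derivative p + (C b * (1 - X) - C a * (1 + X)) * p :=
  rfl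

lemma jacobiRaise_mul (p q : ℝ[X]) :
    jacobiRaise a b (p * q) = (1 - X ^ 2) * (derivative p * q) + p * jacobiRaise a b q := by
  simp only [jacobiRaise_apply, derivative_mul]
  ring

lemma natCast_mul_jacobiBasis_sub_one_left (i j : ℕ) :
    (i : ℝ[X]) * jacobiBasis (i - 1) j * (C 2⁻¹ * (X - 1)) = (i : ℝ[X]) * jacobiBasis i j := by
  cases i with
  | zero => simp
  | succ i => rw [Nat.add_sub_cancel, jacobiBasis, jacobiBasis]; ring

lemma natCast_mul_jacobiBasis_sub_one_right (i j : ℕ) :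
    (j : ℝ[X]) * jacobiBasis i (j - 1) * (C 2⁻¹ * (X + 1)) = (j : ℝ[X]) * jacobiBasis i j := by
  cases j with
  | zero => simp
  | succ j => rw [Nat.add_sub_cancel, jacobiBasis, jacobiBasis]; ring

lemma jacobiRaise_jacobiBasis (i j : ℕ) :
    jacobiRaise a b (jacobiBasis i j) =
      (-2 : ℝ) • ((a + i) • jacobiBasis i (j + 1) + (b + j) • jacobiBasis (i + 1) j) := by
  have hi := natCast_mul_jacobiBasis_sub_one_left i j
  have hj := natCast_mul_jacobiBasis_sub_one_right i j
  have hsucc_left : jacobiBasis (i + 1) j = C 2⁻¹ * (X - 1) * jacobiBasis i j := by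
    rw [jacobiBasis, jacobiBasis]; ring
  have hsucc_right : jacobiBasis i (j + 1) = C 2⁻¹ * (X + 1) * jacobiBasis i j := by
    rw [jacobiBasis, jacobiBasis]; ring
  have htwo : (C 2⁻¹ : ℝ[X]) * 2 = 1 := by rw [← C_ofNat, ← C_mul]; norm_num
  rw [jacobiRaise_apply, derivative_jacobiBasis, hsucc_left, hsucc_right]
  simp only [nsmul_eq_mul, smul_eq_C_mul, C_add, C_neg, C_ofNat, C_eq_natCast]
  linear_combination -(1 + X) * hi + (1 - X) * hj +
    ((1 + X) * (C a + (i : ℝ[X])) - (1 - X) * (C b + (j : ℝ[X]))) * jacobiBasis i j * htwo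

theorem jacobiRaise_jacobiPoly (n : ℕ) :
    jacobiRaise a b (jacobiPoly a b n) =
      (-2 * (n + 1) : ℝ) • jacobiPoly (a - 1) (b - 1) (n + 1) := by
  rw [mul_smul, ← Nat.cast_add_one, Nat.cast_smul_eq_nsmul, jacobiPoly, jacobiPoly,
    nsmul_sum_antidiagonal_succ, map_sum, smul_sum]
  refine sum_congr rfl fun ⟨i, j⟩ _ => ?_
  have ha := add_one_mul_gammaChoose_succ_right (a - 1) i j
  have hb := add_one_mul_gammaChoose_succ_right (b - 1) j i
  simp only [map_smul, jacobiRaise_jacobiBasis, gammaChoose_succ_left, sub_add_cancel] at ha hb ⊢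
  rw [smul_comm]
  congr 1
  simp only [← Nat.cast_smul_eq_nsmul ℝ, smul_smul, smul_add]
  push_cast
  rw [add_comm]
  congr 2
  · linear_combination -gammaChoose a i j * hb
  · linear_combination -gammaChoose b j i * ha

end Raise

/-- The Jacobi weight `(1 - x) ^ a * (1 + x) ^ b`. -/
noncomputable def jacobiWeight (a b x : ℝ) : ℝ := (1 - x) ^ a * (1 + x) ^ b

/-- The moment functional `p ↦ ∫ p(x) (1 - x) ^ a (1 + x) ^ b dx` over `(-1, 1)`. It is a plain
function, being additive only for `-1 < a` and `-1 < b`. -/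
noncomputable def jacobiIntegral (a b : ℝ) (p : ℝ[X]) : ℝ :=
  ∫ x in Set.Ioo (-1) 1, p.eval x * jacobiWeight a b x

section Weight

variable {a b x : ℝ}

lemma jacobiWeight_pos (hx : x ∈ Set.Ioo (-1) 1) : 0 < jacobiWeight a b x :=
  mul_pos (rpow_pos_of_pos (by linarith [hx.2]) _) (rpow_pos_of_pos (by linarith [hx.1]) _)

lemma jacobiWeight_eq_mul_sub_one (hx : x ∈ Set.Ioo (-1) 1) :
    jacobiWeight a b x = (1 - x ^ 2) * jacobiWeight (a - 1) (b - 1) x := by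
  have hl : 1 - x ≠ 0 := by linarith [hx.2]
  have hr : 1 + x ≠ 0 := by linarith [hx.1]
  rw [jacobiWeight, jacobiWeight, rpow_sub_one hl, rpow_sub_one hr]
  field_simp
  ring

lemma hasDerivAt_jacobiWeight (hx : x ∈ Set.Ioo (-1) 1) :
    HasDerivAt (jacobiWeight a b)
      ((b * (1 - x) - a * (1 + x)) * jacobiWeight (a - 1) (b - 1) x) x := by
  have hl : 1 - x ≠ 0 := by linarith [hx.2]
  have hr : 1 + x ≠ 0 := by linarith [hx.1]
  refine ((((hasDerivAt_id x).const_sub 1).rpow_const (Or.inl hl)).mul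
    (((hasDerivAt_id x).const_add 1).rpow_const (Or.inl hr))).congr_deriv ?_
  simp only [id_eq, jacobiWeight, rpow_sub_one hl, rpow_sub_one hr]
  field_simp
  ring

lemma hasDerivAt_eval_mul_jacobiWeight (p : ℝ[X]) (hx : x ∈ Set.Ioo (-1) 1) :
    HasDerivAt (fun y => p.eval y * jacobiWeight a b y)
      ((jacobiRaise a b p).eval x * jacobiWeight (a - 1) (b - 1) x) x := by
  refine ((p.hasDerivAt x).mul (hasDerivAt_jacobiWeight hx)).congr_deriv ?_
  rw [jacobiWeight_eq_mul_sub_one hx]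
  simp only [jacobiRaise_apply, eval_add, eval_sub, eval_mul, eval_pow, eval_C, eval_X, eval_one]
  ring

end Weight

section WeightIntegral

variable {a b : ℝ}

lemma integral_rpow_mul_sub_rpow {c : ℝ} (hc : 0 < c) (ha : -1 < a) (hb : -1 < b) :
    ∫ y in (0 : ℝ)..c, y ^ a * (c - y) ^ b =
      c ^ (a + b + 1) * (Gamma (a + 1) * Gamma (b + 1) / Gamma (a + b + 2)) := by
  have hpow : (c : ℂ) ^ (((a + 1 : ℝ) : ℂ) + ((b + 1 : ℝ) : ℂ) - 1) =
      ((c ^ (a + b + 1) : ℝ) : ℂ) := by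
    rw [Complex.ofReal_cpow hc.le]
    push_cast
    ring_nf
  have hbeta := Complex.betaIntegral_scaled ((a + 1 : ℝ) : ℂ) ((b + 1 : ℝ) : ℂ) hc
  rw [Complex.betaIntegral_eq_Gamma_mul_div _ _ (by rw [Complex.ofReal_re]; linarith)
    (by rw [Complex.ofReal_re]; linarith), hpow, ← Complex.ofReal_add, Complex.Gamma_ofReal,
    Complex.Gamma_ofReal, Complex.Gamma_ofReal, show a + 1 + (b + 1) = a + b + 2 by ring] at hbeta
  apply Complex.ofReal_injective
  rw [← intervalIntegral.integral_ofReal, Complex.ofReal_mul, Complex.ofReal_div,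
    Complex.ofReal_mul, ← hbeta]
  refine intervalIntegral.integral_congr fun y hy => ?_
  rw [Set.uIcc_of_le hc.le] at hy
  simp only [Complex.ofReal_mul, Complex.ofReal_cpow hy.1, Complex.ofReal_cpow (sub_nonneg.2 hy.2),
    Complex.ofReal_add, Complex.ofReal_sub, Complex.ofReal_one, add_sub_cancel_right]

lemma integral_jacobiWeight (ha : -1 < a) (hb : -1 < b) :
    ∫ x in Set.Ioo (-1) 1, jacobiWeight a b x =
      2 ^ (a + b + 1) * (Gamma (a + 1) * Gamma (b + 1) / Gamma (a + b + 2)) := by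
  have hweight : jacobiWeight a b = fun x => (1 - x) ^ a * (2 - (1 - x)) ^ b := by
    funext x
    rw [jacobiWeight, show 2 - (1 - x) = 1 + x by ring]
  rw [← integral_Ioc_eq_integral_Ioo, ← intervalIntegral.integral_of_le (by norm_num), hweight,
    intervalIntegral.integral_comp_sub_left (fun y : ℝ => y ^ a * (2 - y) ^ b),
    ← integral_rpow_mul_sub_rpow two_pos ha hb]
  norm_num

lemma integrableOn_jacobiWeight (ha : -1 < a) (hb : -1 < b) :
    IntegrableOn (jacobiWeight a b) (Set.Ioo (-1) 1) := by
  -- A non-integrable function has integral `0`, so the value of the beta integral suffices.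
  refine Integrable.of_integral_ne_zero ?_
  have hΓa : 0 < Gamma (a + 1) := Gamma_pos_of_pos (by linarith)
  have hΓb : 0 < Gamma (b + 1) := Gamma_pos_of_pos (by linarith)
  have hΓab : 0 < Gamma (a + b + 2) := Gamma_pos_of_pos (by linarith)
  rw [integral_jacobiWeight ha hb]
  positivity

lemma integrableOn_eval_mul_jacobiWeight (p : ℝ[X]) (ha : -1 < a) (hb : -1 < b) :
    IntegrableOn (fun x => p.eval x * jacobiWeight a b x) (Set.Ioo (-1) 1) :=
  (((integrableOn_Icc_iff_integrableOn_Ioo).2 (integrableOn_jacobiWeight ha hb)).continuousOn_mul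
    p.continuousOn isCompact_Icc).mono_set Set.Ioo_subset_Icc_self

end WeightIntegral

section Functional

variable {a b : ℝ}

lemma jacobiIntegral_one (ha : -1 < a) (hb : -1 < b) :
    jacobiIntegral a b 1 =
      2 ^ (a + b + 1) * (Gamma (a + 1) * Gamma (b + 1) / Gamma (a + b + 2)) := by
  simp only [jacobiIntegral, eval_one, one_mul, integral_jacobiWeight ha hb]

lemma jacobiIntegral_zero (a b : ℝ) : jacobiIntegral a b 0 = 0 := by
  simp [jacobiIntegral]

lemma jacobiIntegral_add (ha : -1 < a) (hb : -1 < b) (p q : ℝ[X]) :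
    jacobiIntegral a b (p + q) = jacobiIntegral a b p + jacobiIntegral a b q := by
  simp only [jacobiIntegral, eval_add, add_mul]
  exact integral_add (integrableOn_eval_mul_jacobiWeight p ha hb)
    (integrableOn_eval_mul_jacobiWeight q ha hb)

lemma jacobiIntegral_smul (a b c : ℝ) (p : ℝ[X]) :
    jacobiIntegral a b (c • p) = c * jacobiIntegral a b p := by
  simp only [jacobiIntegral, eval_smul, smul_eq_mul, mul_assoc, integral_const_mul]

lemma jacobiIntegral_one_sub_sq_mul (a b : ℝ) (p : ℝ[X]) :
    jacobiIntegral (a - 1) (b - 1) ((1 - X ^ 2) * p) = jacobiIntegral a b p := by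
  refine setIntegral_congr_fun measurableSet_Ioo fun x hx => ?_
  simp only [jacobiWeight_eq_mul_sub_one (a := a) (b := b) hx, eval_mul, eval_sub, eval_pow,
    eval_one, eval_X]
  ring

lemma jacobiIntegral_jacobiRaise (ha : 0 < a) (hb : 0 < b) (p : ℝ[X]) :
    jacobiIntegral (a - 1) (b - 1) (jacobiRaise a b p) = 0 := by
  have hcont : Continuous (jacobiWeight a b) :=
    ((continuous_const.sub continuous_id).rpow_const fun _ => Or.inr ha.le).mul
      ((continuous_const.add continuous_id).rpow_const fun _ => Or.inr hb.le)
  have hint := integrableOn_eval_mul_jacobiWeight (jacobiRaise a b p)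
    (show -1 < a - 1 by linarith) (show -1 < b - 1 by linarith)
  rw [jacobiIntegral, ← integral_Ioc_eq_integral_Ioo,
    ← intervalIntegral.integral_of_le (by norm_num),
    intervalIntegral.integral_eq_sub_of_hasDerivAt_of_le (by norm_num)
      (p.continuous.mul hcont).continuousOn (fun x hx => hasDerivAt_eval_mul_jacobiWeight p hx)
      ((intervalIntegrable_iff_integrableOn_Ioo_of_le (by norm_num)).2 hint)]
  simp [jacobiWeight, zero_rpow ha.ne', zero_rpow hb.ne']

end Functional

section Orthogonality

variable {α β : ℝ}

lemma jacobiIntegral_mul_jacobiPoly_succ (hα : -1 < α) (hβ : -1 < β) (f : ℝ[X]) (n : ℕ) :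
    2 * (n + 1) * jacobiIntegral α β (f * jacobiPoly α β (n + 1)) =
      jacobiIntegral (α + 1) (β + 1) (derivative f * jacobiPoly (α + 1) (β + 1) n) := by
  have hparts := jacobiIntegral_jacobiRaise (a := α + 1) (b := β + 1) (by linarith) (by linarith)
    (f * jacobiPoly (α + 1) (β + 1) n)
  have hshift := jacobiIntegral_one_sub_sq_mul (α + 1) (β + 1)
    (derivative f * jacobiPoly (α + 1) (β + 1) n)
  rw [jacobiRaise_mul, jacobiRaise_jacobiPoly, mul_smul_comm] at hparts
  simp only [add_sub_cancel_right] at hparts hshift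
  rw [jacobiIntegral_add hα hβ, jacobiIntegral_smul, hshift] at hparts
  linarith

theorem jacobiIntegral_mul_jacobiPoly_eq_zero (hα : -1 < α) (hβ : -1 < β) {n : ℕ} {q : ℝ[X]}
    (hq : q.degree < n) : jacobiIntegral α β (q * jacobiPoly α β n) = 0 := by
  induction n generalizing α β q with
  | zero =>
    rw [Nat.cast_zero, Nat.WithBot.lt_zero_iff, degree_eq_bot] at hq
    rw [hq, zero_mul, jacobiIntegral_zero]
  | succ n ih =>
    have hderiv : (derivative q).degree < n := by
      rw [degree_lt_iff_coeff_zero] at hq ⊢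
      intro m hm
      rw [coeff_derivative, hq (m + 1) (by omega), zero_mul]
    have hparts := jacobiIntegral_mul_jacobiPoly_succ hα hβ q n
    rw [ih (by linarith) (by linarith) hderiv] at hparts
    exact (mul_eq_zero.1 hparts).resolve_left (by positivity)

end Orthogonality

section Norm

variable {α β : ℝ}

lemma jacobih_succ (α β : ℝ) (n : ℕ) :
    jacobih α β (n + 1) = (n + α + β + 2) / (4 * (n + 1)) * jacobih (α + 1) (β + 1) n := by
  have hΓ := inv_Gamma_eq_self_mul_inv_Gamma_add_one (n + α + β + 2)
  have hpow : (2 : ℝ) ^ (α + 1 + (β + 1) + 1) = 4 * 2 ^ (α + β + 1) := by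
    rw [show α + 1 + (β + 1) + 1 = α + β + 1 + 2 by ring, rpow_add two_pos]
    norm_num
    ring
  have hn : (n : ℝ) + 1 ≠ 0 := by positivity
  simp only [jacobih, Nat.factorial_succ, Nat.cast_mul, Nat.cast_add, Nat.cast_one, hpow,
    div_eq_mul_inv, mul_inv]
  rw [show (n : ℝ) + 1 + α + β + 1 = n + α + β + 2 by ring, hΓ,
    show (n : ℝ) + (α + 1) + (β + 1) + 1 = n + α + β + 2 + 1 by ring,
    show (n : ℝ) + 1 + α + 1 = n + (α + 1) + 1 by ring,
    show (n : ℝ) + 1 + β + 1 = n + (β + 1) + 1 by ring,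
    show 2 * ((n : ℝ) + 1) + α + β + 1 = 2 * n + (α + 1) + (β + 1) + 1 by ring]
  field_simp

lemma jacobih_pos (hα : -1 < α) (hβ : -1 < β) (hαβ : 0 < α + β + 1) (n : ℕ) :
    0 < jacobih α β n := by
  have hΓα : 0 < Gamma (n + α + 1) := Gamma_pos_of_pos (by linarith)
  have hΓβ : 0 < Gamma (n + β + 1) := Gamma_pos_of_pos (by linarith)
  have hΓαβ : 0 < Gamma (n + α + β + 1) := Gamma_pos_of_pos (by linarith)
  have hden : 0 < 2 * (n : ℝ) + α + β + 1 := by linarith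
  unfold jacobih
  positivity

/-- At `n = 0` and `α + β = -1` the formula for `jacobih` divides by zero. -/
theorem jacobiIntegral_jacobiPoly_sq (hα : -1 < α) (hβ : -1 < β) (hαβ : α + β + 1 ≠ 0) (n : ℕ) :
    jacobiIntegral α β (jacobiPoly α β n ^ 2) = jacobih α β n := by
  induction n generalizing α β with
  | zero =>
    have hΓ : Gamma (α + β + 1 + 1) = (α + β + 1) * Gamma (α + β + 1) := Gamma_add_one hαβ
    rw [jacobiPoly_zero hα hβ, one_pow, jacobiIntegral_one hα hβ,
      show α + β + 2 = α + β + 1 + 1 by ring, hΓ, jacobih]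
    simp only [Nat.cast_zero, Nat.factorial_zero, Nat.cast_one, mul_zero, zero_add, mul_one]
    ring
  | succ n ih =>
    have hparts := jacobiIntegral_mul_jacobiPoly_succ hα hβ (jacobiPoly α β (n + 1)) n
    rw [derivative_jacobiPoly_succ, smul_mul_assoc, jacobiIntegral_smul, ← sq, ← sq,
      ih (by linarith) (by linarith) (by linarith)] at hparts
    rw [jacobih_succ]
    field_simp
    linarith

lemma jacobiPoly_ne_zero (hα : -1 < α) (hβ : -1 < β) (hαβ : 0 < α + β + 1) (n : ℕ) :
    jacobiPoly α β n ≠ 0 := by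
  intro hzero
  have hnorm := jacobiIntegral_jacobiPoly_sq hα hβ hαβ.ne' n
  rw [hzero, zero_pow two_ne_zero, jacobiIntegral_zero] at hnorm
  exact (jacobih_pos hα hβ hαβ n).ne hnorm

end Norm

section SecondMoments

variable {α β : ℝ}

lemma degree_linear_mul_derivative_sub_lt {R : Type*} [CommRing R] {p : R[X]} {n : ℕ}
    (hp : p.natDegree ≤ n) (a b : R) :
    ((C a * X + C b) * derivative p - C ((n : R) * a) * p).degree < (n : WithBot ℕ) := by
  rw [degree_lt_iff_coeff_zero]
  intro m hm
  have hcoeff : ∀ k, n < k → p.coeff k = 0 := fun k hk =>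
    coeff_eq_zero_of_natDegree_lt (hp.trans_lt hk)
  have heuler : (X * derivative p).coeff m = m * p.coeff m := by
    cases m with
    | zero => simp
    | succ m => rw [coeff_X_mul, coeff_derivative]; push_cast; ring
  rw [add_mul, mul_assoc, coeff_sub, coeff_add, coeff_C_mul, coeff_C_mul, coeff_C_mul,
    coeff_derivative, hcoeff (m + 1) (by omega), heuler]
  rcases hm.eq_or_lt with rfl | hlt
  · ring
  · rw [hcoeff m hlt]
    ring

theorem jacobiIntegral_sub_one_jacobiPoly_sq (hα : 0 < α) (hβ : 0 < β) (n : ℕ) :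
    jacobiIntegral (α - 1) (β - 1) (jacobiPoly α β n ^ 2) =
      (2 * n + α + β + 1) * (α + β) / (4 * α * β) * jacobih α β n := by
  set P := jacobiPoly α β n
  -- `q` is chosen so that `jacobiRaise α β q` is a constant modulo `1 - X ^ 2`.
  set q : ℝ[X] := C (α + β) * X + C (β - α) with hq
  have hα' : -1 < α := by linarith
  have hβ' : -1 < β := by linarith
  have hnorm : jacobiIntegral α β (P ^ 2) = jacobih α β n :=
    jacobiIntegral_jacobiPoly_sq hα' hβ' (by linarith) n
  have hraise : jacobiRaise α β (P ^ 2 * q) =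
      (1 - X ^ 2) * ((2 : ℝ) • ((q * derivative P - C (n * (α + β)) * P) * P) +
        ((2 * n + α + β + 1) * (α + β)) • P ^ 2) - (4 * α * β) • P ^ 2 := by
    simp only [hq, jacobiRaise_apply, smul_eq_C_mul, derivative_mul, derivative_sq, derivative_add,
      derivative_sub, derivative_C, derivative_X, C_add, C_sub, C_mul, C_1, C_ofNat, C_eq_natCast]
    ring
  have horth : jacobiIntegral α β ((q * derivative P - C (n * (α + β)) * P) * P) = 0 :=
    jacobiIntegral_mul_jacobiPoly_eq_zero hα' hβ'
      (degree_linear_mul_derivative_sub_lt (natDegree_jacobiPoly_le α β n) _ _)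
  have hparts := jacobiIntegral_jacobiRaise hα hβ (P ^ 2 * q)
  rw [hraise, sub_eq_add_neg (_ * _), ← neg_smul, jacobiIntegral_add (by linarith) (by linarith),
    jacobiIntegral_one_sub_sq_mul, jacobiIntegral_add hα' hβ', jacobiIntegral_smul,
    jacobiIntegral_smul, jacobiIntegral_smul, horth, hnorm] at hparts
  field_simp
  linarith

theorem jacobiIntegral_derivative_jacobiPoly_sq (hα : -1 < α) (hβ : -1 < β) (n : ℕ) :
    jacobiIntegral α β (derivative (jacobiPoly α β n) ^ 2) =
      n * (n + α + β + 1) * (2 * n + α + β + 1) * (α + β + 2) / (4 * (α + 1) * (β + 1)) *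
        jacobih α β n := by
  cases n with
  | zero => simp [jacobiPoly_zero hα hβ, jacobiIntegral_zero]
  | succ n =>
    have hmoment := jacobiIntegral_sub_one_jacobiPoly_sq (α := α + 1) (β := β + 1)
      (by linarith) (by linarith) n
    simp only [add_sub_cancel_right] at hmoment
    have hα' : α + 1 ≠ 0 := by linarith
    have hβ' : β + 1 ≠ 0 := by linarith
    rw [derivative_jacobiPoly_succ, _root_.smul_pow, jacobiIntegral_smul, hmoment, jacobih_succ]
    push_cast
    field_simp
    ring

theorem jacobiIntegral_jacobiRaise_jacobiPoly_sq (hα : 1 < α) (hβ : 1 < β) (n : ℕ) :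
    jacobiIntegral (α - 2) (β - 2) (jacobiRaise α β (jacobiPoly α β n) ^ 2) =
      (n + 1) * (n + α + β) * (2 * n + α + β + 1) * (α + β - 2) / (4 * (α - 1) * (β - 1)) *
        jacobih α β n := by
  have hmoment := jacobiIntegral_sub_one_jacobiPoly_sq (sub_pos.2 hα) (sub_pos.2 hβ) (n + 1)
  have hα' : α - 1 ≠ 0 := by linarith
  have hβ' : β - 1 ≠ 0 := by linarith
  rw [jacobih_succ, sub_add_cancel, sub_add_cancel, sub_sub, sub_sub, one_add_one_eq_two]
    at hmoment
  rw [jacobiRaise_jacobiPoly, _root_.smul_pow, jacobiIntegral_smul, hmoment]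
  push_cast
  field_simp
  ring

lemma jacobiIntegral_one_sub_sq_mul_add_sq (hα : 1 < α) (hβ : 1 < β) (p q : ℝ[X]) :
    jacobiIntegral (α - 2) (β - 2) (((1 - X ^ 2) * p + q) ^ 2) =
      jacobiIntegral α β (p ^ 2) + 2 * jacobiIntegral (α - 1) (β - 1) (p * q) +
        jacobiIntegral (α - 2) (β - 2) (q ^ 2) := by
  have hexpand : ((1 - X ^ 2) * p + q) ^ 2 =
      (1 - X ^ 2) * ((1 - X ^ 2) * p ^ 2 + (2 : ℝ) • (p * q)) + q ^ 2 := by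
    rw [smul_eq_C_mul, C_ofNat]
    ring
  have hα' : α - 2 = α - 1 - 1 := by ring
  have hβ' : β - 2 = β - 1 - 1 := by ring
  rw [hexpand, hα', hβ', jacobiIntegral_add (by linarith) (by linarith),
    jacobiIntegral_one_sub_sq_mul, jacobiIntegral_add (by linarith) (by linarith),
    jacobiIntegral_one_sub_sq_mul, jacobiIntegral_smul]

lemma jacobiIntegral_derivative_mul_jacobiRaise_jacobiPoly (hα : 0 < α) (hβ : 0 < β) (n : ℕ) :
    jacobiIntegral (α - 1) (β - 1)
      (derivative (jacobiPoly α β n) * jacobiRaise α β (jacobiPoly α β n)) = 0 := by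
  have hdegree : (derivative (jacobiPoly α β n)).degree < (n + 1 : ℕ) :=
    degree_derivative_le.trans_lt <|
      (degree_le_of_natDegree_le (natDegree_jacobiPoly_le α β n)).trans_lt
        (mod_cast n.lt_succ_self)
  rw [jacobiRaise_jacobiPoly, mul_smul_comm, jacobiIntegral_smul,
    jacobiIntegral_mul_jacobiPoly_eq_zero (by linarith) (by linarith) hdegree, mul_zero]

end SecondMoments

section Fisher

lemma deriv_sq_div_jacobiWeight {a b c x : ℝ} {p : ℝ[X]} (hx : x ∈ Set.Ioo (-1) 1)
    (hp : p.eval x ≠ 0) :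
    deriv (fun y => p.eval y ^ 2 / c * jacobiWeight a b y) x ^ 2 /
        (p.eval x ^ 2 / c * jacobiWeight a b x) =
      (((1 - X ^ 2) * derivative p + jacobiRaise a b p) ^ 2).eval x *
        jacobiWeight (a - 2) (b - 2) x / c := by
  have hderiv : HasDerivAt (fun y => p.eval y ^ 2 / c * jacobiWeight a b y)
      (p.eval x * ((1 - X ^ 2) * derivative p + jacobiRaise a b p).eval x *
        jacobiWeight (a - 1) (b - 1) x / c) x := by
    have h := (hasDerivAt_eval_mul_jacobiWeight (a := a) (b := b) (p * p) hx).div_const c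
    rw [jacobiRaise_mul] at h
    simp only [eval_mul, eval_add] at h ⊢
    refine (h.congr_deriv ?_).congr_of_eventuallyEq ?_
    · ring
    · exact Filter.Eventually.of_forall fun y => by simp only; ring
  have hw := (jacobiWeight_pos (a := a - 2) (b := b - 2) hx).ne'
  have hx' : 1 - x ^ 2 ≠ 0 := by nlinarith [hx.1, hx.2]
  rw [hderiv.deriv, jacobiWeight_eq_mul_sub_one hx (a := a),
    jacobiWeight_eq_mul_sub_one hx (a := a - 1), sub_sub, sub_sub, one_add_one_eq_two, eval_pow]
  rcases eq_or_ne c 0 with rfl | hc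
  · simp
  · field_simp

theorem setIntegral_deriv_sq_div {p : ℝ[X]} (hp : p ≠ 0) (a b c : ℝ) :
    ∫ x in Set.Ioo (-1) 1, deriv (fun y => p.eval y ^ 2 / c * jacobiWeight a b y) x ^ 2 /
        (p.eval x ^ 2 / c * jacobiWeight a b x) =
      jacobiIntegral (a - 2) (b - 2)
        (((1 - X ^ 2) * derivative p + jacobiRaise a b p) ^ 2) / c := by
  have hroots : ∀ᵐ x, p.eval x ≠ 0 :=
    measure_eq_zero_iff_ae_notMem.1 ((finite_setOfPred_isRoot hp).measure_zero volume)
  rw [jacobiIntegral, ← integral_div]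
  refine setIntegral_congr_ae measurableSet_Ioo ?_
  filter_upwards [hroots] with x hpx hx using deriv_sq_div_jacobiWeight hx hpx

lemma jacobiρ_eq (α β : ℝ) (n : ℕ) :
    jacobiρ α β n =
      fun x => (jacobiPoly α β n).eval x ^ 2 / jacobih α β n * jacobiWeight α β x := by
  funext x
  rw [eval_jacobiPoly, jacobiρ, jacobiWeight, mul_assoc]

end Fisher

/-- For every `n ∈ ℕ` and reals `α > 1`, `β > 1`, the Fisher information
of the Rakhmanov density of the orthonormal Jacobi polynomial equals the stated
expression. -/
theorem jacobi_fisher (n : ℕ) (α β : ℝ) (hα : 1 < α) (hβ : 1 < β) :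
    (∫ x in Set.Ioo (-1 : ℝ) 1, (deriv (jacobiρ α β n) x) ^ 2 / jacobiρ α β n x) =
      (2 * (n : ℝ) + α + β + 1) / (4 * ((n : ℝ) + α + β - 1)) *
        ((n : ℝ) * ((n : ℝ) + α + β - 1) *
            (((n : ℝ) + α) / (β + 1) + 2 + ((n : ℝ) + β) / (α + 1)) +
         ((n : ℝ) + 1) * ((n : ℝ) + α + β) *
            (((n : ℝ) + α) / (β - 1) + 2 + ((n : ℝ) + β) / (α - 1))) := by
  have hpos : 0 < jacobih α β n := jacobih_pos (by linarith) (by linarith) (by linarith) n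
  have hP : jacobiPoly α β n ≠ 0 :=
    jacobiPoly_ne_zero (by linarith) (by linarith) (by linarith) n
  have hne : (n : ℝ) + α + β - 1 ≠ 0 := by linarith
  have hα₁ : α - 1 ≠ 0 := by linarith
  have hβ₁ : β - 1 ≠ 0 := by linarith
  rw [jacobiρ_eq, setIntegral_deriv_sq_div hP, jacobiIntegral_one_sub_sq_mul_add_sq hα hβ,
    jacobiIntegral_derivative_mul_jacobiRaise_jacobiPoly (by linarith) (by linarith),
    jacobiIntegral_derivative_jacobiPoly_sq (by linarith) (by linarith),
    jacobiIntegral_jacobiRaise_jacobiPoly_sq hα hβ]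
  field_simp
  ring
end

section
/- Let y_n(x) = Σ_{t=0}^{n} c_t x^t be a polynomial of degree at most n with real coefficients, and set c_i = 0 for i > n. Then for every positive integer p, [y_n(x)]^p = Σ_{t=0}^{np} ( p!/(t+p)! ) · B_{t+p,p}(c_0, 2! c_1, …, (t+1)! c_t) · x^t, where B_{m,l} denotes the partial Bell polynomial. -/
open MeasureTheory Real

/-- The partial Bell polynomial `B_{m,l}(c_1, c_2, …, c_{m−l+1})`: the sum over all tuples
`(j_1, …, j_{m−l+1})` of nonnegative integers with `j_1 + ⋯ + j_{m−l+1} = l` and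
`j_1 + 2j_2 + ⋯ + (m−l+1)j_{m−l+1} = m` of
`m!/(j_1!⋯j_{m−l+1}!) · ∏_k (c_k/k!)^{j_k}`. Here the arguments are given as a function
`c : ℕ → ℝ`, where `c k` is the `k`-th argument `c_k` (for `1 ≤ k ≤ m − l + 1`). -/
noncomputable def bellB (m l : ℕ) (c : ℕ → ℝ) : ℝ :=
  ∑ j ∈ (Fintype.piFinset fun _ : Fin (m - l + 1) => Finset.range (m + 1)) |>.filter
      (fun j => (∑ i, j i) = l ∧ (∑ i, (i.1 + 1) * j i) = m),
    (m.factorial : ℝ) / (∏ i, ((j i).factorial : ℝ)) *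
      ∏ i, (c (i.1 + 1) / ((i.1 + 1).factorial : ℝ)) ^ (j i)

/-!
Up to the factor `m! / l!`, the partial Bell polynomial `B_{m,l}(c₁, c₂, …)` is the coefficient of
`X ^ (m - l)` in the `l`-th power of the power series `∑ᵢ (c_{i+1} / (i+1)!) Xⁱ`: that coefficient
only involves the truncation after `X ^ (m - l)`, whose `l`-th power is given by the multinomial
theorem. With `c_{i+1} = (i+1)! aᵢ` the series becomes `∑ᵢ aᵢ Xⁱ`, and a polynomial identity may be
evaluated in any algebra.
-/

open Finset

section PowerSeries

variable {R : Type*} [CommSemiring R]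

theorem coeff_sum_monomial_pow {ι : Type*} [DecidableEq ι] (s : Finset ι) (d : ι → ℕ) (a : ι → R)
    (p t : ℕ) :
    ((∑ i ∈ s, Polynomial.monomial (d i) (a i)) ^ p).coeff t =
      ∑ k ∈ s.piAntidiag p with ∑ i ∈ s, d i * k i = t,
        (Nat.multinomial s k : R) * ∏ i ∈ s, a i ^ k i := by
  have prod_monomial (k : ι → ℕ) : ∏ i ∈ s, Polynomial.monomial (d i) (a i) ^ k i =
      Polynomial.monomial (∑ i ∈ s, d i * k i) (∏ i ∈ s, a i ^ k i) := by
    simp only [← Polynomial.C_mul_X_pow_eq_monomial, mul_pow, ← pow_mul, ← map_pow,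
      prod_mul_distrib, prod_pow_eq_pow_sum, map_prod]
  simp only [sum_pow_eq_sum_piAntidiag, prod_monomial, Polynomial.finsetSum_coeff,
    Polynomial.coeff_natCast_mul, Polynomial.coeff_monomial, mul_ite, mul_zero, sum_filter]

theorem coeff_trunc_pow_of_lt (φ : PowerSeries R) (p : ℕ) {t n : ℕ} (htn : t < n) :
    (PowerSeries.trunc n φ ^ p).coeff t = PowerSeries.coeff t (φ ^ p) := by
  rw [← PowerSeries.coeff_coe_trunc_of_lt htn, ← PowerSeries.trunc_trunc_pow,
    PowerSeries.coeff_coe_trunc_of_lt htn, ← Polynomial.coe_pow, Polynomial.coeff_coe]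

theorem coeff_pow_eq_sum_multinomial (φ : PowerSeries R) (p t : ℕ) :
    PowerSeries.coeff t (φ ^ p) =
      ∑ k ∈ (univ : Finset (Fin (t + 1))).piAntidiag p with ∑ i : Fin (t + 1), (i : ℕ) * k i = t,
        (Nat.multinomial univ k : R) * ∏ i : Fin (t + 1), PowerSeries.coeff (i : ℕ) φ ^ k i := by
  rw [← coeff_trunc_pow_of_lt φ p t.lt_succ_self, PowerSeries.trunc_apply, Nat.Ico_zero_eq_range,
    sum_range, coeff_sum_monomial_pow]

end PowerSeries

theorem bellB_eq_sum_piAntidiag (m l : ℕ) (c : ℕ → ℝ) :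
    bellB m l c =
      ∑ j ∈ (univ : Finset (Fin (m - l + 1))).piAntidiag l with ∑ i, (i.1 + 1) * j i = m,
        (m.factorial : ℝ) / (∏ i, ((j i).factorial : ℝ)) *
          ∏ i, (c (i.1 + 1) / ((i.1 + 1).factorial : ℝ)) ^ j i := by
  refine sum_congr (Finset.ext fun j ↦ ?_) fun _ _ ↦ rfl
  have entry_le (hm : ∑ i, (i.1 + 1) * j i = m) (i) : j i ≤ m := calc
    j i ≤ (i.1 + 1) * j i := Nat.le_mul_of_pos_left _ (Nat.succ_pos _)
    _ ≤ ∑ i, (i.1 + 1) * j i :=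
      single_le_sum_of_canonicallyOrdered (f := fun i ↦ (i.1 + 1) * j i) (mem_univ i)
    _ = m := hm
  simpa [Nat.lt_succ_iff] using fun _ hm ↦ entry_le hm

theorem natCast_multinomial_eq_div {ι K : Type*} [Semifield K] [CharZero K] (s : Finset ι)
    (k : ι → ℕ) :
    (Nat.multinomial s k : K) =
      ((∑ i ∈ s, k i).factorial : K) / ∏ i ∈ s, ((k i).factorial : K) := by
  rw [eq_div_iff (prod_ne_zero_iff.2 fun i _ ↦ Nat.cast_ne_zero.2 (k i).factorial_ne_zero),
    mul_comm]
  exact_mod_cast Nat.multinomial_spec s k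

theorem bellB_eq_coeff_pow {m l : ℕ} (hlm : l ≤ m) (c : ℕ → ℝ) :
    bellB m l c = (m.factorial : ℝ) / (l.factorial : ℝ) *
      PowerSeries.coeff (m - l)
        ((PowerSeries.mk fun i ↦ c (i + 1) / ((i + 1).factorial : ℝ)) ^ l) := by
  rw [bellB_eq_sum_piAntidiag, coeff_pow_eq_sum_multinomial, mul_sum]
  refine sum_congr (filter_congr fun j hj ↦ ?_) fun j hj ↦ ?_
  · have hsum : ∑ i, j i = l := (mem_piAntidiag.1 hj).1
    simp only [add_mul, one_mul, sum_add_distrib, hsum]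
    omega
  · have hsum : ∑ i, j i = l := (mem_piAntidiag.1 (mem_filter.1 hj).1).1
    have hl : (l.factorial : ℝ) ≠ 0 := Nat.cast_ne_zero.2 l.factorial_ne_zero
    simp only [natCast_multinomial_eq_div, hsum, PowerSeries.coeff_mk]
    field_simp

theorem coeff_mk_pow_eq_bellB (c : ℕ → ℝ) (p t : ℕ) :
    PowerSeries.coeff t (PowerSeries.mk c ^ p) =
      (p.factorial : ℝ) / ((t + p).factorial : ℝ) *
        bellB (t + p) p (fun k ↦ (k.factorial : ℝ) * c (k - 1)) := by
  have factorial_ne_zero (k : ℕ) : (k.factorial : ℝ) ≠ 0 := Nat.cast_ne_zero.2 k.factorial_ne_zero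
  simp only [bellB_eq_coeff_pow (Nat.le_add_left p t), Nat.add_sub_cancel,
    mul_div_cancel_left₀ _ (factorial_ne_zero _)]
  field_simp [factorial_ne_zero]

theorem poly_power_bell_general {A : Type*} [Semiring A] [Algebra ℝ A] (n : ℕ) (c : ℕ → ℝ)
    (hc : ∀ i, n < i → c i = 0) (p : ℕ) (x : A) :
    (∑ t ∈ range (n + 1), c t • x ^ t) ^ p =
      ∑ t ∈ range (n * p + 1),
        ((p.factorial : ℝ) / ((t + p).factorial : ℝ) *
          bellB (t + p) p (fun k ↦ (k.factorial : ℝ) * c (k - 1))) • x ^ t := by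
  set y : Polynomial ℝ := PowerSeries.trunc (n + 1) (PowerSeries.mk c)
  have hy : (y : PowerSeries ℝ) = PowerSeries.mk c := by
    ext i
    simp only [y, Polynomial.coeff_coe, PowerSeries.coeff_trunc, PowerSeries.coeff_mk]
    exact ite_eq_left_iff.2 fun hi ↦ (hc i (by omega)).symm
  have hdeg : y.natDegree ≤ n := Nat.le_of_lt_succ (PowerSeries.natDegree_trunc_lt _ n)
  have hpow_deg : (y ^ p).natDegree ≤ n * p :=
    (Polynomial.natDegree_pow_le_of_le p hdeg).trans_eq (mul_comm p n)
  have hcoeff (t : ℕ) : (y ^ p).coeff t = PowerSeries.coeff t (PowerSeries.mk c ^ p) := by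
    rw [← hy, ← Polynomial.coe_pow, Polynomial.coeff_coe]
  calc (∑ t ∈ range (n + 1), c t • x ^ t) ^ p
      = Polynomial.aeval x y ^ p := by
        simp only [Polynomial.aeval_eq_sum_range' (Nat.lt_succ_of_le hdeg), ← Polynomial.coeff_coe,
          hy, PowerSeries.coeff_mk]
    _ = ∑ t ∈ range (n * p + 1), (y ^ p).coeff t • x ^ t := by
        rw [← map_pow, Polynomial.aeval_eq_sum_range' (Nat.lt_succ_of_le hpow_deg)]
    _ = _ := by simp only [hcoeff, coeff_mk_pow_eq_bellB]

/-- Let `y_n(x) = Σ_{t=0}^n c_t x^t` with `c_i = 0` for `i > n`. Then for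
every positive integer `p`,
`[y_n(x)]^p = Σ_{t=0}^{np} (p!/(t+p)!) · B_{t+p,p}(c_0, 2! c_1, …, (t+1)! c_t) · x^t`,
where the `k`-th Bell argument is `k! · c_{k−1}`. -/
theorem poly_power_bell (n : ℕ) (c : ℕ → ℝ) (hc : ∀ i, n < i → c i = 0)
    (p : ℕ) (hp : 0 < p) (x : ℝ) :
    (∑ t ∈ Finset.range (n + 1), c t * x ^ t) ^ p =
      ∑ t ∈ Finset.range (n * p + 1),
        (p.factorial : ℝ) / ((t + p).factorial : ℝ) *
          bellB (t + p) p (fun k => (k.factorial : ℝ) * c (k - 1)) * x ^ t := by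
  simpa only [smul_eq_mul] using poly_power_bell_general n c hc p x
end

section
/- For every n ∈ ℕ and every even positive integer k, the Shannon length of the Rakhmanov density of the orthonormal Hermite polynomial satisfies the upper bound N[ρ_n] ≤ ( 2 (e k)^{1/k} / k ) · Γ(1/k) · ( ⟨x^k⟩_n )^{1/k}. -/
/-!
For a density `ρ` and a potential `V`, Gibbs' inequality against the density proportional to
`exp (-V)` bounds the Shannon length of `ρ` by `exp (∫ ρ V) * ∫ exp (-V)`. For
`V x = |x| ^ p / (p * m)`, with `m` the absolute `p`-th moment of `ρ`, the first factor is
`exp (1 / p)` and the second is a Gamma integral; this choice of scale minimizes the product.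
The recurrence `H_{n+1} = 2 x H_n - H_n'` says that `H_{n+1}` arises from `H_n` by the adjoint of
differentiation in `L²(exp (-x²) dx)`, which together with `H_{n+1}' = 2 (n + 1) H_n` gives the
normalization of the Rakhmanov density.
-/

open MeasureTheory Real

section Entropy

variable {α : Type*} [MeasurableSpace α] {μ : Measure α} {ρ : α → ℝ}

/-- The Shannon length `N[ρ] = exp (-∫ ρ log ρ)` of a density `ρ` with respect to `μ`, the
exponential of its differential entropy. It has the junk value `1` when `ρ log ρ` is not
integrable. -/
noncomputable def shannonLength (ρ : α → ℝ) (μ : Measure α := by volume_tac) : ℝ :=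
  exp (-∫ x, ρ x * log (ρ x) ∂μ)

/-- Fenchel–Young for `r ↦ r log r - r` and its convex conjugate `exp`. -/
lemma mul_add_sub_exp_le_mul_log {r : ℝ} (hr : 0 ≤ r) (w : ℝ) :
    r * w + (r - exp w) ≤ r * log r := by
  rcases hr.eq_or_lt with rfl | hr
  · simpa using (exp_pos w).le
  · have key : r * (w - log r + 1) ≤ r * exp (w - log r) :=
      mul_le_mul_of_nonneg_left (add_one_le_exp _) hr.le
    rw [exp_sub, exp_log hr, mul_div_cancel₀ _ hr.ne'] at key
    linarith

lemma integrable_mul_log_self {W : α → ℝ} (hρ_nonneg : ∀ x, 0 ≤ ρ x) (hρ : Integrable ρ μ)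
    (hρ_sq : Integrable (fun x ↦ ρ x ^ 2) μ) (hρW : Integrable (fun x ↦ ρ x * W x) μ)
    (hW : Integrable (fun x ↦ exp (W x)) μ) :
    Integrable (fun x ↦ ρ x * log (ρ x)) μ := by
  have hmeas : AEStronglyMeasurable (fun x ↦ ρ x * log (ρ x)) μ :=
    continuous_mul_log.comp_aestronglyMeasurable hρ.aestronglyMeasurable
  refine integrable_of_le_of_le hmeas
    (.of_forall fun x ↦ mul_add_sub_exp_le_mul_log (hρ_nonneg x) (W x)) (.of_forall fun x ↦ ?_)
    (hρW.add (hρ.sub hW)) hρ_sq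
  rw [sq]
  exact mul_le_mul_of_nonneg_left (log_le_self (hρ_nonneg x)) (hρ_nonneg x)

lemma integral_mul_le_integral_mul_log {W : α → ℝ} (hρ_nonneg : ∀ x, 0 ≤ ρ x)
    (hρ : Integrable ρ μ) (hρW : Integrable (fun x ↦ ρ x * W x) μ)
    (hW : Integrable (fun x ↦ exp (W x)) μ) (hρ_log : Integrable (fun x ↦ ρ x * log (ρ x)) μ)
    (hmass : ∫ x, exp (W x) ∂μ ≤ ∫ x, ρ x ∂μ) :
    ∫ x, ρ x * W x ∂μ ≤ ∫ x, ρ x * log (ρ x) ∂μ := by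
  have hdiff : Integrable (fun x ↦ ρ x - exp (W x)) μ := hρ.sub hW
  calc ∫ x, ρ x * W x ∂μ
      ≤ ∫ x, ρ x * W x ∂μ + (∫ x, ρ x ∂μ - ∫ x, exp (W x) ∂μ) := by linarith
    _ = ∫ x, ρ x * W x + (ρ x - exp (W x)) ∂μ := by
        rw [integral_add hρW hdiff, integral_sub hρ hW]
    _ ≤ ∫ x, ρ x * log (ρ x) ∂μ :=
        integral_mono (hρW.add hdiff) hρ_log fun x ↦
          mul_add_sub_exp_le_mul_log (hρ_nonneg x) (W x)

lemma shannonLength_le_exp_mul_integral_exp_neg {V : α → ℝ} (hρ_nonneg : ∀ x, 0 ≤ ρ x)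
    (hρ_mass : ∫ x, ρ x ∂μ = 1) (hρV : Integrable (fun x ↦ ρ x * V x) μ)
    (hV : Integrable (fun x ↦ exp (-V x)) μ)
    (hρ_log : Integrable (fun x ↦ ρ x * log (ρ x)) μ) :
    shannonLength ρ μ ≤ exp (∫ x, ρ x * V x ∂μ) * ∫ x, exp (-V x) ∂μ := by
  set Z := ∫ x, exp (-V x) ∂μ
  have hρ : Integrable ρ μ := integrable_of_integral_eq_one hρ_mass
  have : NeZero μ := ⟨by rintro rfl; simp at hρ_mass⟩
  have hZ : 0 < Z := integral_exp_pos hV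
  have hW (x : α) : exp (-V x - log Z) = exp (-V x) / Z := by rw [exp_sub, exp_log hZ]
  have hρW (x : α) : ρ x * (-V x - log Z) = -(ρ x * V x) - ρ x * log Z := by ring
  have gibbs := integral_mul_le_integral_mul_log (W := fun x ↦ -V x - log Z) hρ_nonneg hρ
    (by simp only [hρW]; exact hρV.fun_neg.sub (hρ.mul_const _))
    (by simpa only [hW] using hV.div_const Z) hρ_log
    (by simp only [hW, integral_div, hρ_mass]; exact (div_self hZ.ne').le)
  simp only [hρW] at gibbs
  rw [integral_sub hρV.fun_neg (hρ.mul_const _), integral_neg, integral_mul_const, hρ_mass,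
    one_mul] at gibbs
  calc shannonLength ρ μ
      ≤ exp (∫ x, ρ x * V x ∂μ + log Z) := exp_le_exp.2 (by linarith)
    _ = exp (∫ x, ρ x * V x ∂μ) * Z := by rw [exp_add, exp_log hZ]

lemma integral_mul_pos_of_ae_pos {g : α → ℝ} (hg : ∀ᵐ x ∂μ, 0 < g x) (hρ_nonneg : ∀ x, 0 ≤ ρ x)
    (hρ_ne : ∫ x, ρ x ∂μ ≠ 0) (hint : Integrable (fun x ↦ g x * ρ x) μ) :
    0 < ∫ x, g x * ρ x ∂μ := by
  have hnonneg : 0 ≤ᵐ[μ] fun x ↦ g x * ρ x := by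
    filter_upwards [hg] with x hx using mul_nonneg hx.le (hρ_nonneg x)
  refine (integral_nonneg_of_ae hnonneg).lt_of_ne' fun hzero ↦ hρ_ne ?_
  refine integral_eq_zero_of_ae ?_
  filter_upwards [hg, (integral_eq_zero_iff_of_nonneg_ae hnonneg hint).1 hzero] with x hx hgρ
  exact (mul_eq_zero.1 hgρ).resolve_left hx.ne'

end Entropy

lemma integral_abs_rpow_mul_exp_neg_mul_abs_rpow {p q b : ℝ} (hp : 0 < p) (hq : -1 < q)
    (hb : 0 < b) :
    ∫ x : ℝ, |x| ^ q * exp (-b * |x| ^ p) =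
      2 * (b ^ (-(q + 1) / p) * (1 / p) * Gamma ((q + 1) / p)) := by
  rw [integral_comp_abs (f := fun x ↦ x ^ q * exp (-b * x ^ p)),
    integral_rpow_mul_exp_neg_mul_rpow hp hq hb]

lemma integrable_abs_rpow_mul_exp_neg_mul_abs_rpow {p q b : ℝ} (hp : 0 < p) (hq : -1 < q)
    (hb : 0 < b) : Integrable fun x : ℝ ↦ |x| ^ q * exp (-b * |x| ^ p) := by
  refine .of_integral_ne_zero ?_
  rw [integral_abs_rpow_mul_exp_neg_mul_abs_rpow hp hq hb]
  have : 0 < Gamma ((q + 1) / p) := Gamma_pos_of_pos (div_pos (by linarith) hp)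
  positivity

lemma integral_exp_neg_abs_rpow_div {p c : ℝ} (hp : 0 < p) (hc : 0 < c) :
    ∫ x : ℝ, exp (-(|x| ^ p / c)) = 2 * c ^ (1 / p) / p * Gamma (1 / p) := by
  calc ∫ x : ℝ, exp (-(|x| ^ p / c))
      = ∫ x : ℝ, |x| ^ (0 : ℝ) * exp (-c⁻¹ * |x| ^ p) := by
        simp only [rpow_zero, one_mul, div_eq_inv_mul, neg_mul]
    _ = 2 * (c⁻¹ ^ (-(0 + 1) / p) * (1 / p) * Gamma ((0 + 1) / p)) :=
        integral_abs_rpow_mul_exp_neg_mul_abs_rpow hp neg_one_lt_zero (inv_pos.2 hc)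
    _ = 2 * c ^ (1 / p) / p * Gamma (1 / p) := by
        rw [zero_add, neg_div, inv_rpow hc.le, rpow_neg hc.le, inv_inv]
        ring

lemma integrable_exp_neg_abs_rpow_div {p c : ℝ} (hp : 0 < p) (hc : 0 < c) :
    Integrable fun x : ℝ ↦ exp (-(|x| ^ p / c)) := by
  simpa only [rpow_zero, one_mul, div_eq_inv_mul, neg_mul] using
    integrable_abs_rpow_mul_exp_neg_mul_abs_rpow hp neg_one_lt_zero (inv_pos.2 hc)

lemma shannonLength_le_absMoment {ρ : ℝ → ℝ} {p : ℝ} (hp : 0 < p) (hρ_nonneg : ∀ x, 0 ≤ ρ x)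
    (hρ_mass : ∫ x, ρ x = 1) (hmoment : Integrable fun x ↦ |x| ^ p * ρ x)
    (hρ_log : Integrable fun x ↦ ρ x * log (ρ x)) :
    shannonLength ρ ≤
      2 * (exp 1 * p) ^ (1 / p) / p * Gamma (1 / p) * (∫ x, |x| ^ p * ρ x) ^ (1 / p) := by
  have hm_pos : 0 < ∫ x, |x| ^ p * ρ x := by
    refine integral_mul_pos_of_ae_pos ?_ hρ_nonneg (hρ_mass ▸ one_ne_zero) hmoment
    filter_upwards [Measure.ae_ne volume 0] with x hx using rpow_pos_of_pos (abs_pos.2 hx) p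
  set m := ∫ x, |x| ^ p * ρ x with hm
  have hc : 0 < p * m := by positivity
  have hρV (x : ℝ) : ρ x * (|x| ^ p / (p * m)) = |x| ^ p * ρ x / (p * m) := by ring
  have hmean : ∫ x, ρ x * (|x| ^ p / (p * m)) = 1 / p := by
    simp only [hρV, integral_div]
    rw [← hm, div_mul_cancel_right₀ hm_pos.ne', one_div]
  calc shannonLength ρ
      ≤ exp (∫ x, ρ x * (|x| ^ p / (p * m))) * ∫ x : ℝ, exp (-(|x| ^ p / (p * m))) :=
        shannonLength_le_exp_mul_integral_exp_neg hρ_nonneg hρ_mass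
          (by simpa only [hρV] using hmoment.div_const _)
          (integrable_exp_neg_abs_rpow_div hp hc) hρ_log
    _ = exp (1 / p) * (2 * (p * m) ^ (1 / p) / p * Gamma (1 / p)) := by
        rw [hmean, integral_exp_neg_abs_rpow_div hp hc]
    _ = 2 * (exp 1 * p) ^ (1 / p) / p * Gamma (1 / p) * m ^ (1 / p) := by
        rw [mul_rpow hp.le hm_pos.le, mul_rpow (exp_pos 1).le hp.le, exp_one_rpow]
        ring

section Hermite

open Polynomial

lemma integrable_abs_rpow_mul_eval_mul_exp_neg_mul_sq {s b : ℝ} (hs : 0 ≤ s) (hb : 0 < b)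
    (P : ℝ[X]) : Integrable fun x : ℝ ↦ |x| ^ s * (P.eval x * exp (-b * x ^ 2)) := by
  induction P using Polynomial.induction_on' with
  | add P Q hP hQ => simpa only [eval_add, add_mul, mul_add] using hP.fun_add hQ
  | monomial n a =>
    have hsn : -1 < s + n := neg_one_lt_zero.trans_le (by positivity)
    have hmeas : AEStronglyMeasurable
        (fun x : ℝ ↦ |x| ^ s * ((monomial n a).eval x * exp (-b * x ^ 2))) volume := by fun_prop
    refine (integrable_norm_iff hmeas).1 ?_
    refine ((integrable_abs_rpow_mul_exp_neg_mul_abs_rpow two_pos hsn hb).const_mul |a|).congr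
      (.of_forall fun x ↦ ?_)
    simp only [eval_monomial, norm_mul, norm_pow, norm_eq_abs, abs_rpow_of_nonneg (abs_nonneg x),
      abs_abs, abs_exp, rpow_add_of_nonneg (abs_nonneg x) hs n.cast_nonneg, rpow_natCast,
      rpow_two, sq_abs]
    ring

lemma integrable_eval_mul_exp_neg_sq (P : ℝ[X]) :
    Integrable fun x : ℝ ↦ P.eval x * exp (-x ^ 2) := by
  simpa using integrable_abs_rpow_mul_eval_mul_exp_neg_mul_sq le_rfl one_pos P

lemma integral_two_mul_X_mul_sub_derivative_mul (P Q : ℝ[X]) :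
    ∫ x : ℝ, ((2 * X * P - derivative P) * Q).eval x * exp (-x ^ 2) =
      ∫ x : ℝ, (P * derivative Q).eval x * exp (-x ^ 2) := by
  have hderiv (x : ℝ) : HasDerivAt (fun y ↦ (P * Q).eval y * exp (-y ^ 2))
      ((P * derivative Q).eval x * exp (-x ^ 2) -
        ((2 * X * P - derivative P) * Q).eval x * exp (-x ^ 2)) x := by
    refine (((P * Q).hasDerivAt x).fun_mul (hasDerivAt_pow 2 x).fun_neg.exp).congr_deriv ?_
    simp only [derivative_mul, eval_add, eval_sub, eval_mul, eval_X, eval_ofNat]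
    ring
  have hzero := integral_eq_zero_of_hasDerivAt_of_integrable hderiv
    ((integrable_eval_mul_exp_neg_sq _).sub (integrable_eval_mul_exp_neg_sq _))
    (integrable_eval_mul_exp_neg_sq _)
  rw [integral_sub (integrable_eval_mul_exp_neg_sq _) (integrable_eval_mul_exp_neg_sq _)] at hzero
  exact (sub_eq_zero.1 hzero).symm

/-- The physicists' Hermite polynomial `H_n` as an element of `ℝ[X]`, defined by
`H_{n+1} = 2 x H_n - H_n'` instead of the three-term recurrence of `hermiteH`. Mathlib's
`Polynomial.hermite` is the probabilists' family, which differs by a rescaling. -/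
noncomputable def physHermite : ℕ → ℝ[X]
  | 0 => 1
  | n + 1 => 2 * X * physHermite n - derivative (physHermite n)

lemma derivative_physHermite_succ (n : ℕ) :
    derivative (physHermite (n + 1)) = C (2 * ((n : ℝ) + 1)) * physHermite n := by
  induction n with
  | zero => simp [physHermite, C_ofNat]
  | succ n ih =>
    calc derivative (physHermite (n + 2))
        = derivative (2 * X * physHermite (n + 1) - derivative (physHermite (n + 1))) := rfl
      _ = 2 * physHermite (n + 1) +
            C (2 * ((n : ℝ) + 1)) * (2 * X * physHermite n - derivative (physHermite n)) := by
          rw [derivative_sub, derivative_mul, ih, derivative_C_mul]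
          simp only [derivative_mul, derivative_ofNat, derivative_X]
          ring
      _ = C (2 * (((n + 1 : ℕ) : ℝ) + 1)) * physHermite (n + 1) := by
          rw [← physHermite]
          simp only [Nat.cast_add, Nat.cast_one, C_mul, C_add, C_1, C_ofNat]
          ring

lemma eval_physHermite (n : ℕ) (x : ℝ) : (physHermite n).eval x = hermiteH n x := by
  induction n using Nat.twoStepInduction with
  | zero => simp [physHermite, hermiteH]
  | one => simp [physHermite, hermiteH]
  | more n ih₀ ih₁ =>
    rw [physHermite, derivative_physHermite_succ]
    simp [hermiteH, ih₀, ih₁]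

lemma integral_physHermite_sq_mul_exp_neg_sq (n : ℕ) :
    ∫ x : ℝ, (physHermite n ^ 2).eval x * exp (-x ^ 2) = 2 ^ n * (n.factorial : ℝ) * √π := by
  induction n with
  | zero => simpa [physHermite] using integral_gaussian 1
  | succ n ih =>
    calc ∫ x : ℝ, (physHermite (n + 1) ^ 2).eval x * exp (-x ^ 2)
        = ∫ x : ℝ, (physHermite n * derivative (physHermite (n + 1))).eval x * exp (-x ^ 2) := by
          rw [← integral_two_mul_X_mul_sub_derivative_mul, ← physHermite, sq]
      _ = ∫ x : ℝ, 2 * ((n : ℝ) + 1) * ((physHermite n ^ 2).eval x * exp (-x ^ 2)) := by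
          congr 1 with x
          rw [derivative_physHermite_succ]
          simp only [eval_mul, eval_C, eval_pow]
          ring
      _ = 2 ^ (n + 1) * ((n + 1).factorial : ℝ) * √π := by
          rw [integral_const_mul, ih, Nat.factorial_succ]
          push_cast
          ring

lemma hermiteρ_nonneg (n : ℕ) (x : ℝ) : 0 ≤ hermiteρ n x := by
  unfold hermiteρ
  positivity

lemma hermiteρ_eq_eval_mul_exp (n : ℕ) (x : ℝ) :
    hermiteρ n x =
      (C (2 ^ n * (n.factorial : ℝ) * √π)⁻¹ * physHermite n ^ 2).eval x * exp (-x ^ 2) := by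
  rw [eval_C_mul, eval_pow, eval_physHermite, hermiteρ]
  ring

lemma integral_hermiteρ (n : ℕ) : ∫ x, hermiteρ n x = 1 := by
  simp only [hermiteρ_eq_eval_mul_exp, eval_C_mul, mul_assoc _⁻¹, integral_const_mul,
    integral_physHermite_sq_mul_exp_neg_sq]
  exact inv_mul_cancel₀ (by positivity)

lemma integrable_abs_rpow_mul_hermiteρ (n : ℕ) {p : ℝ} (hp : 0 ≤ p) :
    Integrable fun x ↦ |x| ^ p * hermiteρ n x := by
  simpa only [hermiteρ_eq_eval_mul_exp, neg_one_mul] using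
    integrable_abs_rpow_mul_eval_mul_exp_neg_mul_sq hp one_pos _

lemma integrable_hermiteρ_sq (n : ℕ) : Integrable fun x ↦ hermiteρ n x ^ 2 := by
  have hsq (x : ℝ) : exp (-x ^ 2) ^ 2 = exp (-2 * x ^ 2) := by
    rw [← exp_nat_mul]
    ring_nf
  simpa only [hermiteρ_eq_eval_mul_exp, mul_pow, hsq, ← eval_pow, rpow_zero, one_mul] using
    integrable_abs_rpow_mul_eval_mul_exp_neg_mul_sq le_rfl two_pos _

lemma integrable_hermiteρ_mul_log (n : ℕ) :
    Integrable fun x ↦ hermiteρ n x * log (hermiteρ n x) := by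
  refine integrable_mul_log_self (W := fun x ↦ -|x|) (hermiteρ_nonneg n)
    (integrable_of_integral_eq_one (integral_hermiteρ n)) (integrable_hermiteρ_sq n) ?_ ?_
  · simpa [mul_comm] using (integrable_abs_rpow_mul_hermiteρ n zero_le_one).neg
  · simpa using integrable_abs_rpow_mul_exp_neg_mul_abs_rpow one_pos neg_one_lt_zero one_pos

theorem hermite_shannon_bound_general (n : ℕ) {p : ℝ} (hp : 0 < p) :
    shannonLength (hermiteρ n) ≤
      2 * (exp 1 * p) ^ (1 / p) / p * Gamma (1 / p) *
        (∫ x : ℝ, |x| ^ p * hermiteρ n x) ^ (1 / p) :=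
  shannonLength_le_absMoment hp (hermiteρ_nonneg n) (integral_hermiteρ n)
    (integrable_abs_rpow_mul_hermiteρ n hp.le) (integrable_hermiteρ_mul_log n)

end Hermite

/-- For every `n ∈ ℕ` and every even positive integer `k`, the Shannon
length `N[ρ_n] = exp(−∫ ρ_n log ρ_n)` of the Rakhmanov density of the orthonormal Hermite
polynomial satisfies `N[ρ_n] ≤ (2(ek)^{1/k}/k) Γ(1/k) ⟨x^k⟩_n^{1/k}`. -/
theorem hermite_shannon_bound (n k : ℕ) (hk : 0 < k) (hke : Even k) :
    Real.exp (-∫ x : ℝ, hermiteρ n x * Real.log (hermiteρ n x)) ≤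
      2 * (Real.exp 1 * (k : ℝ)) ^ ((1 : ℝ) / k) / (k : ℝ) * Real.Gamma (1 / (k : ℝ)) *
        (∫ x : ℝ, x ^ k * hermiteρ n x) ^ ((1 : ℝ) / k) := by
  simpa only [shannonLength, rpow_natCast, hke.pow_abs] using
    hermite_shannon_bound_general n (Nat.cast_pos.2 hk)
end
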